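/- arXiv:1805.12345 — 6 statements merged into one kernel-verified Lean document; each statement's English description precedes it below -/
import Mathlib

section
/- Suppose gcd(n,q)=1, (r+δ-1) | n, and set ρ = n/(r+δ-1). Let ℓ_1 < ℓ_2 < ... < ℓ_{δ-1} be an arithmetic progression of δ-1 integers with common difference b, where gcd(b,n)=1. Let ξ be a primitive n-th root of unity in the splitting field F_{q^s} of x^n - 1 over F_q, and consider the (δ-1)ρ vectors h_j^{(ℓ_i)} = (1, ξ^{j(r+δ-1)+ℓ_i}, ξ^{2(j(r+δ-1)+ℓ_i)}, ..., ξ^{(n-1)(j(r+δ-1)+ℓ_i)}) ∈ F_{q^s}^n for i = 1,...,δ-1 and j = 1,...,ρ. Define, for i = 1,...,δ-1, the vector V_i ∈ F_{q^s}^n whose coordinate at position m is (ξ^{ρℓ_i})^{m/ρ} if ρ divides m (for m = 0, ρ, 2ρ, ..., (r+δ-2)ρ) and 0 otherwise. Then every cyclic shift of every V_i lies in the F_{q^s}-linear span of the vectors h_j^{(ℓ_i)}. -/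
open Polynomial

/-- For an `n`-th root of unity `z`, shifting `(1, z, ..., z ^ (n - 1))` cyclically multiplies
it by `z⁻¹`. -/
lemma pow_val_sub_one_of_pow_eq_one {K : Type*} [Field K] {n : ℕ} [NeZero n] {z : K}
    (hz : z ^ n = 1) (x : Fin n) : z ^ ((x - 1 : Fin n) : ℕ) = z⁻¹ * z ^ (x : ℕ) := by
  have hz0 : z ≠ 0 := by
    rintro rfl
    simp [zero_pow (NeZero.ne n)] at hz
  have key : z ^ (x : ℕ) = z ^ ((x - 1 : Fin n) : ℕ) * z := by
    conv_lhs => rw [← sub_add_cancel x 1]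
    rw [Fin.val_add, ← pow_eq_pow_mod _ hz, pow_add, Fin.val_one',
      ← pow_eq_pow_mod _ hz, pow_one]
  rw [key]
  field_simp

/-- The sum of the powers `w ^ 1, ..., w ^ ρ` vanishes for a nontrivial `ρ`-th root of unity. -/
lemma sum_pow_succ_eq_zero_of_pow_eq_one {K : Type*} [Field K] {ρ : ℕ} {w : K}
    (hw : w ^ ρ = 1) (hw1 : w ≠ 1) : ∑ j : Fin ρ, w ^ ((j : ℕ) + 1) = 0 := by
  rw [Fin.sum_univ_eq_sum_range (fun j => w ^ (j + 1))]
  simp_rw [pow_succ]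
  rw [← Finset.sum_mul, geom_sum_eq hw1, hw]
  simp

/-- Lemma 2: with `ρ = n/(r+δ-1)`, an arithmetic progression `ℓ_i = ℓ + i·b`
(`i = 0, ..., δ-2`) with `gcd(b,n) = 1`, the vectors
`h_j^{(ℓ_i)} = (1, ξ^{j(r+δ-1)+ℓ_i}, ξ^{2(j(r+δ-1)+ℓ_i)}, ..., ξ^{(n-1)(j(r+δ-1)+ℓ_i)})`
(`j = 1, ..., ρ`), and the vectors `V_i` supported on the positions divisible by `ρ`
with value `(ξ^{ρℓ_i})^{m/ρ}` at position `m`, every cyclic shift of every `V_i` lies in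
the `F_{q^s}`-linear span of the vectors `h_j^{(ℓ_i)}`. -/
theorem shifts_mem_span_of_rows (F K : Type*) [Field F] [Fintype F] [Field K] [Algebra F K]
    (q n r δ : ℕ) (hq : Fintype.card F = q) [NeZero n] (hcop : Nat.Coprime n q)
    (hr : 1 ≤ r) (hδ : 2 ≤ δ) (hdvd : (r + δ - 1) ∣ n)
    (ρ : ℕ) (hρ : ρ = n / (r + δ - 1))
    (ξ : K) (hξ : IsPrimitiveRoot ξ n)
    (ℓ b : ℤ) (hbpos : 0 < b) (hb : Int.gcd b n = 1)
    (h : Fin (δ - 1) → Fin ρ → Fin n → K)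
    (hh : ∀ i j m', h i j m' =
      ξ ^ ((m' : ℤ) * (((j : ℕ) + 1 : ℤ) * ((r + δ - 1 : ℕ) : ℤ) + (ℓ + (i : ℕ) * b))))
    (V : Fin (δ - 1) → Fin n → K)
    (hV : ∀ i m', V i m' = if ρ ∣ (m' : ℕ)
        then (ξ ^ ((ρ : ℤ) * (ℓ + (i : ℕ) * b))) ^ ((m' : ℕ) / ρ) else 0) :
    ∀ i : Fin (δ - 1), ∀ t : ℕ,
      (fun v : Fin n → K => fun x : Fin n => v (x - 1))^[t] (V i) ∈
        Submodule.span K (Set.range fun p : Fin (δ - 1) × Fin ρ => h p.1 p.2) := by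
  set N := r + δ - 1
  have hNpos : 0 < N := by omega
  have hn : n = N * ρ := by rw [hρ, Nat.mul_div_cancel' hdvd]
  have hξ0 : ξ ≠ 0 := hξ.ne_zero (NeZero.ne n)
  have hρK : (ρ : K) ≠ 0 := by
    have hnK : (n : K) ≠ 0 := hξ.neZero'.ne
    rw [hn, Nat.cast_mul] at hnK
    exact right_ne_zero_of_mul hnK
  have hzpow (a : ℤ) : (ξ ^ a) ^ n = 1 := by
    rw [← zpow_natCast, zpow_comm, zpow_natCast, hξ.pow_eq_one, one_zpow]
  set S := Submodule.span K (Set.range fun p : Fin (δ - 1) × Fin ρ => h p.1 p.2)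
  have hmem (i : Fin (δ - 1)) (j : Fin ρ) : h i j ∈ S := Submodule.subset_span ⟨(i, j), rfl⟩
  -- every row is an eigenvector of the cyclic shift
  have hshift : S ≤ S.comap (LinearMap.funLeft K K fun x : Fin n => x - 1) := by
    refine Submodule.span_le.2 ?_
    rintro _ ⟨⟨i, j⟩, rfl⟩
    set a : ℤ := ((j : ℕ) + 1 : ℤ) * (N : ℤ) + (ℓ + (i : ℕ) * b)
    have hrow (x : Fin n) : h i j x = (ξ ^ a) ^ (x : ℕ) := by
      rw [hh, mul_comm, zpow_mul, zpow_natCast]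
    have heq : LinearMap.funLeft K K (fun x : Fin n => x - 1) (h i j) = (ξ ^ a)⁻¹ • h i j := by
      ext x
      rw [LinearMap.funLeft_apply, Pi.smul_apply, smul_eq_mul, hrow, hrow,
        pow_val_sub_one_of_pow_eq_one (hzpow a)]
    change LinearMap.funLeft K K (fun x : Fin n => x - 1) (h i j) ∈ S
    rw [heq]
    exact S.smul_mem _ (hmem i j)
  intro i t
  induction t with
  | zero =>
    have hVi : V i = (ρ : K)⁻¹ • ∑ j, h i j := by
      ext m
      have hsplit (j : Fin ρ) : h i j m =
          (ξ ^ (ℓ + (i : ℕ) * b)) ^ (m : ℕ) * (ξ ^ ((m : ℕ) * N)) ^ ((j : ℕ) + 1) := by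
        rw [hh, ← zpow_natCast, ← zpow_natCast, ← zpow_natCast, ← zpow_mul, ← zpow_mul,
          ← zpow_add₀ hξ0]
        congr 1
        push_cast
        ring
      rw [Pi.smul_apply, Finset.sum_apply, smul_eq_mul, hV]
      simp_rw [hsplit]
      rw [← Finset.mul_sum]
      split_ifs with hdiv
      · obtain ⟨k, hk⟩ := hdiv
        have hone : ξ ^ ((m : ℕ) * N) = 1 :=
          (hξ.pow_eq_one_iff_dvd _).2 ⟨k, by rw [hk, hn]; ring⟩
        have hρpos : 0 < ρ := Nat.pos_of_ne_zero fun h0 => hρK (by simp [h0])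
        rw [hone, hk, Nat.mul_div_cancel_left _ hρpos, mul_comm (ρ : ℤ), zpow_mul, zpow_natCast,
          ← pow_mul]
        simp only [one_pow, Finset.sum_const, Finset.card_univ, Fintype.card_fin, nsmul_eq_mul,
          mul_one]
        field_simp
      · rw [sum_pow_succ_eq_zero_of_pow_eq_one, mul_zero, mul_zero]
        · rw [← pow_mul, hξ.pow_eq_one_iff_dvd]
          exact Dvd.intro_left (m : ℕ) (by rw [mul_assoc, ← hn])
        · rw [Ne, hξ.pow_eq_one_iff_dvd, mul_comm (m : ℕ)]
          exact fun hd => hdiv (Nat.dvd_of_mul_dvd_mul_left hNpos (hn.symm.dvd.trans hd))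
    rw [Function.iterate_zero_apply, hVi]
    exact S.smul_mem _ (S.sum_mem fun j _ => hmem i j)
  | succ t ih =>
    rw [Function.iterate_succ_apply']
    exact hshift ih
end

section
/- Suppose gcd(n,q)=1, r ≥ 1, δ ≥ 2, (r+δ-1) | n, and set ρ = n/(r+δ-1). Let C be a q-ary cyclic code of length n with complete defining set Z (the set of roots of its generator polynomial among the n-th roots of unity). Let ℓ_1 < ℓ_2 < ... < ℓ_{δ-1} be an arithmetic progression of δ-1 integers with common difference b, where gcd(b,n)=1. Let ξ be a primitive n-th root of unity in the splitting field of x^n - 1 over F_q, and for an integer ℓ set L_ℓ = { ξ^i : 0 ≤ i ≤ n-1, i ≡ ℓ (mod r+δ-1) }. If Z contains the union L_{ℓ_1} ∪ L_{ℓ_2} ∪ ... ∪ L_{ℓ_{δ-1}}, then C has (r,δ)-locality. -/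
open Polynomial
open scoped Classical

/-- The polynomial with coefficient vector `v`. -/
noncomputable def vecPoly {F : Type*} [Field F] {n : ℕ} (v : Fin n → F) : F[X] :=
  ∑ i : Fin n, C (v i) * X ^ (i : ℕ)

/-- The `q`-ary cyclic code of length `n` with generator polynomial `g`. -/
noncomputable def cyclicCode (F : Type*) [Field F] (n : ℕ) (g : F[X]) :
    Submodule F (Fin n → F) where
  carrier := {v | g ∣ vecPoly v}
  zero_mem' := by
    show g ∣ vecPoly (0 : Fin n → F)
    simp [vecPoly]
  add_mem' := by
    intro a b ha hb
    have h : vecPoly (a + b) = vecPoly a + vecPoly b := by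
      simp [vecPoly, add_mul, Finset.sum_add_distrib]
    show g ∣ vecPoly (a + b)
    rw [h]; exact dvd_add ha hb
  smul_mem' := by
    intro c v hv
    have h : vecPoly (c • v) = C c * vecPoly v := by
      simp [vecPoly, Finset.mul_sum, mul_assoc]
    show g ∣ vecPoly (c • v)
    rw [h]; exact Dvd.dvd.mul_left hv (C c)

/-- The code `Cset` has `(r, δ)`-locality. -/
def HasLocality {F : Type*} [Field F] {n : ℕ} (Cset : Set (Fin n → F)) (r δ : ℕ) : Prop :=
  ∀ i : Fin n, ∃ R : Finset (Fin n), i ∈ R ∧ R.card ≤ r + δ - 1 ∧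
    ∀ v ∈ Cset, (∃ j ∈ R, v j ≠ 0) → δ ≤ (R.filter (fun j => v j ≠ 0)).card

/-- Vandermonde: weights on at most `d` distinct nodes whose first `d` power sums vanish
are all zero. -/
theorem eq_zero_of_weighted_power_sums {ι K : Type*} [Field K] (T : Finset ι) (d : ℕ)
    (hT : T.card ≤ d) (x c : ι → K) (hx : Set.InjOn x T)
    (h : ∀ t < d, ∑ j ∈ T, c j * x j ^ t = 0) {k : ι} (hk : k ∈ T) : c k = 0 := by
  have hpoly (p : K[X]) (hp : p.natDegree < d) : ∑ j ∈ T, c j * p.eval (x j) = 0 := by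
    simp_rw [eval_eq_sum_range, Finset.mul_sum]
    rw [Finset.sum_comm]
    refine Finset.sum_eq_zero fun t ht => ?_
    have := h t (by rw [Finset.mem_range] at ht; omega)
    rw [← mul_zero (p.coeff t), ← this, Finset.mul_sum]
    exact Finset.sum_congr rfl fun j _ => by ring
  have hpos : 0 < T.card := Finset.card_pos.mpr ⟨k, hk⟩
  have hsum := hpoly (∏ j ∈ T.erase k, (X - C (x j))) (by
    rw [natDegree_prod_of_monic _ _ fun j _ => monic_X_sub_C _]
    simp [Finset.card_erase_of_mem hk]
    omega)
  rw [Finset.sum_eq_single_of_mem k hk] at hsum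
  · refine (mul_eq_zero.mp hsum).resolve_right ?_
    rw [eval_prod]
    refine Finset.prod_ne_zero_iff.mpr ?_
    intro j hj
    rw [Finset.mem_erase] at hj
    simpa [sub_eq_zero] using fun e => hj.1 (hx hk hj.2 e).symm
  · intro j hj hjk
    rw [eval_prod, Finset.prod_eq_zero (Finset.mem_erase.mpr ⟨hjk, hj⟩) (by simp), mul_zero]

/-- Orthogonality of the powers of a primitive root of unity. -/
theorem IsPrimitiveRoot.sum_zpow_mul {K : Type*} [Field K] {ζ : K} {ρ : ℕ}
    (hζ : IsPrimitiveRoot ζ ρ) (a : ℤ) :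
    ∑ u ∈ Finset.range ρ, (ζ ^ a) ^ u = if (ρ : ℤ) ∣ a then (ρ : K) else 0 := by
  split_ifs with h
  · simp [(hζ.zpow_eq_one_iff_dvd a).mpr h]
  · have hne : ζ ^ a - 1 ≠ 0 := sub_ne_zero.mpr fun e => h ((hζ.zpow_eq_one_iff_dvd a).mp e)
    refine (mul_eq_zero.mp ?_).resolve_left hne
    rw [mul_geom_sum, ← zpow_natCast, ← zpow_mul, mul_comm, zpow_mul, zpow_natCast, hζ.pow_eq_one,
      one_zpow, sub_self]

/-- If the syndromes of `v` vanish at all exponents congruent to `e` modulo `s`, then so does the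
syndrome at `e` of the restriction of `v` to a residue class modulo `ρ`. -/
theorem sum_residue_class_eq_zero {K : Type*} [Field K] {n s ρ : ℕ} (hn : 0 < n) (hsρ : n = s * ρ)
    {ξ : K} (hξ : IsPrimitiveRoot ξ n) (w : Fin n → K) (e : ℤ)
    (hw : ∀ u : ℕ, ∑ j, w j * (ξ ^ (e + s * u)) ^ (j : ℕ) = 0) (i : Fin n) :
    ∑ j ∈ Finset.univ.filter (fun j : Fin n => (ρ : ℤ) ∣ ((j : ℕ) : ℤ) - ((i : ℕ) : ℤ)),
      w j * (ξ ^ e) ^ (j : ℕ) = 0 := by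
  have hξ0 : ξ ≠ 0 := hξ.ne_zero hn.ne'
  have : NeZero n := ⟨hn.ne'⟩
  have hρ : (ρ : K) ≠ 0 := fun h0 => hξ.neZero'.out (by rw [hsρ, Nat.cast_mul, h0, mul_zero])
  have hζ : IsPrimitiveRoot (ξ ^ s) ρ := hξ.pow hn hsρ
  have key : ∑ u ∈ Finset.range ρ, ξ ^ (-(s * u * (i : ℕ) : ℤ)) *
      ∑ j, w j * (ξ ^ (e + s * u)) ^ (j : ℕ) = 0 :=
    Finset.sum_eq_zero fun u _ => by rw [hw, mul_zero]
  have term (u : ℕ) (j : Fin n) :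
      ξ ^ (-(s * u * (i : ℕ) : ℤ)) * (w j * (ξ ^ (e + s * u)) ^ (j : ℕ)) =
      w j * (ξ ^ e) ^ (j : ℕ) * ((ξ ^ s) ^ (((j : ℕ) : ℤ) - ((i : ℕ) : ℤ))) ^ u := by
    simp only [← zpow_natCast, ← zpow_mul]
    rw [mul_left_comm, ← zpow_add₀ hξ0, mul_assoc (w j), ← zpow_add₀ hξ0]
    congr 2
    ring
  simp_rw [Finset.mul_sum, term] at key
  rw [Finset.sum_comm] at key
  simp_rw [← Finset.mul_sum, hζ.sum_zpow_mul, mul_ite, mul_zero] at key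
  rw [← Finset.sum_filter, ← Finset.sum_mul] at key
  exact (mul_eq_zero.mp key).resolve_right hρ

/-- A residue class modulo `ρ` contains at most `s` of the first `s * ρ` natural numbers. -/
theorem card_residue_class_le {n s ρ : ℕ} (hsρ : n = s * ρ) (i : Fin n) :
    (Finset.univ.filter fun j : Fin n =>
      (ρ : ℤ) ∣ ((j : ℕ) : ℤ) - ((i : ℕ) : ℤ)).card ≤ s := by
  have hρ : 0 < ρ := Nat.pos_of_ne_zero fun h => by
    have := i.pos
    simp [hsρ, h] at this
  rw [← Finset.card_range s]
  refine Finset.card_le_card_of_injOn (fun j => (j : ℕ) / ρ) ?_ ?_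
  · intro j _
    simp [Nat.div_lt_iff_lt_mul hρ, ← hsρ]
  · intro j hj k hk hjk
    simp only [Finset.coe_filter, Finset.mem_univ, true_and, Set.mem_ofPred_eq] at hj hk hjk
    have hmod : (j : ℕ) % ρ = (k : ℕ) % ρ :=
      ((Nat.modEq_iff_dvd.mpr hj).symm.trans (Nat.modEq_iff_dvd.mpr hk) : _ ≡ _ [MOD ρ])
    ext
    rw [← Nat.div_add_mod (j : ℕ) ρ, ← Nat.div_add_mod (k : ℕ) ρ, hmod, hjk]

/-- Proposition 1: if the complete defining set of the cyclic code `C` contains the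
union of the cosets `L_{ℓ_i} = {ξ^m : 0 ≤ m ≤ n-1, m ≡ ℓ_i (mod r+δ-1)}` for an arithmetic
progression `ℓ_i = ℓ + i·b` (`i = 0, ..., δ-2`) with common difference `b`, `gcd(b,n) = 1`,
then `C` has `(r, δ)`-locality. -/
theorem locality_of_defining_set (F K : Type*) [Field F] [Fintype F] [Field K] [Algebra F K]
    (q n r δ : ℕ) (hq : Fintype.card F = q) (hn : 0 < n) (hcop : Nat.Coprime n q)
    (hr : 1 ≤ r) (hδ : 2 ≤ δ) (hdvd : (r + δ - 1) ∣ n)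
    (ρ : ℕ) (hρ : ρ = n / (r + δ - 1))
    (g : F[X]) (hg : g.Monic) (hgdvd : g ∣ X ^ n - 1)
    (ξ : K) (hξ : IsPrimitiveRoot ξ n)
    (ℓ b : ℤ) (hbpos : 0 < b) (hb : Int.gcd b n = 1)
    (hZ : ∀ i : Fin (δ - 1), ∀ m : ℕ, m < n →
      ((r + δ - 1 : ℕ) : ℤ) ∣ ((m : ℤ) - (ℓ + (i : ℕ) * b)) →
      Polynomial.aeval (ξ ^ m) g = 0) :
    HasLocality ((cyclicCode F n g : Submodule F (Fin n → F)) : Set (Fin n → F)) r δ := by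
  have hsρ : n = (r + δ - 1) * ρ := by rw [hρ, Nat.mul_div_cancel' hdvd]
  generalize hs : r + δ - 1 = s at *
  have hξ0 : ξ ≠ 0 := hξ.ne_zero hn.ne'
  have hroot (t : ℕ) (ht : t < δ - 1) (u : ℕ) : aeval (ξ ^ (ℓ + t * b + s * u)) g = 0 := by
    set e : ℤ := ℓ + t * b + s * u with he
    have hn' : (0 : ℤ) < n := by exact_mod_cast hn
    obtain ⟨m, hm⟩ := Int.eq_ofNat_of_zero_le (Int.emod_nonneg e hn'.ne')
    have hdiv : e = n * (e / n) + m := by rw [← hm, Int.mul_ediv_add_emod]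
    have hpow : ξ ^ e = ξ ^ m := by
      rw [hdiv, zpow_add₀ hξ0, zpow_mul, zpow_natCast, hξ.pow_eq_one, one_zpow, one_mul,
        zpow_natCast]
    rw [hpow]
    refine hZ ⟨t, ht⟩ m (by have := Int.emod_lt_of_pos e hn'; omega) ⟨u - ρ * (e / n), ?_⟩
    have hnc : (n : ℤ) = s * ρ := by exact_mod_cast hsρ
    rw [hnc] at hdiv
    rw [hnc]
    linear_combination he - hdiv
  intro i
  refine ⟨Finset.univ.filter fun j : Fin n => (ρ : ℤ) ∣ ((j : ℕ) : ℤ) - ((i : ℕ) : ℤ),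
    by simp, (card_residue_class_le hsρ i).trans hs.ge, ?_⟩
  rintro v hv ⟨k, hk, hvk⟩
  by_contra! hlt
  have hsynd (t : ℕ) (ht : t < δ - 1) (u : ℕ) :
      ∑ j, algebraMap F K (v j) * (ξ ^ (ℓ + t * b + s * u)) ^ (j : ℕ) = 0 := by
    have h0 := aeval_eq_zero_of_dvd_aeval_eq_zero (show g ∣ vecPoly v from hv) (hroot t ht u)
    simpa [vecPoly] using h0
  have hξb : IsPrimitiveRoot (ξ ^ b) n := hξ.zpow_of_gcd_eq_one b hb
  have hzero := eq_zero_of_weighted_power_sums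
    ((Finset.univ.filter fun j : Fin n => (ρ : ℤ) ∣ ((j : ℕ) : ℤ) - ((i : ℕ) : ℤ)).filter
      fun j => v j ≠ 0) (δ - 1) (by omega) (fun j => (ξ ^ b) ^ (j : ℕ))
    (fun j => algebraMap F K (v j) * (ξ ^ ℓ) ^ (j : ℕ))
    (fun j _ k _ hjk => Fin.ext (hξb.pow_inj j.isLt k.isLt hjk)) (fun t ht => ?_)
    (Finset.mem_filter.mpr ⟨hk, hvk⟩)
  · simp [hξ0, zpow_ne_zero, hvk] at hzero
  · rw [← sum_residue_class_eq_zero hn hsρ hξ (fun j => algebraMap F K (v j)) _ (hsynd t ht) i]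
    rw [Finset.sum_filter_of_ne]
    swap
    · rintro j - hj hvj
      simp [hvj] at hj
    refine Finset.sum_congr rfl fun j _ => ?_
    rw [zpow_add₀ hξ0, mul_pow, mul_assoc, mul_comm (t : ℤ) b, zpow_mul, zpow_natCast, ← pow_mul,
      ← pow_mul, mul_comm (j : ℕ) t]
end

section
/- Let q be a prime power and n a positive integer with gcd(n,q)=1. Let r ≥ 2 and δ ≥ 2 be integers such that (r+δ-1) divides gcd(n, q-1). Then there exists a q-ary cyclic code C of length n, dimension k = rn/(r+δ-1) - 1, and minimum distance d = δ+1, such that C has (r,δ)-locality and d = n - k + 1 - (⌈k/r⌉ - 1)(δ - 1) (i.e., C is an optimal (r,δ)-LRC achieving the Singleton-type bound). -/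
open Polynomial
open scoped Classical

/-- Hamming weight of a vector. -/
noncomputable def wt {F : Type*} [Field F] {n : ℕ} (v : Fin n → F) : ℕ :=
  (Finset.univ.filter (fun i => v i ≠ 0)).card

/-- The minimum distance of the code `Cset` is at least `d`. -/
def MinDistGe {F : Type*} [Field F] {n : ℕ} (Cset : Set (Fin n → F)) (d : ℕ) : Prop :=
  ∀ v ∈ Cset, v ≠ 0 → d ≤ wt v

/-- The minimum distance of the code `Cset` is exactly `d`. -/
def MinDistIs {F : Type*} [Field F] {n : ℕ} (Cset : Set (Fin n → F)) (d : ℕ) : Prop :=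
  MinDistGe Cset d ∧ ∃ v ∈ Cset, v ≠ 0 ∧ wt v = d

/-- A linear code is cyclic if it is closed under the cyclic shift
`(c_0, ..., c_{n-1}) ↦ (c_{n-1}, c_0, ..., c_{n-2})`. -/
def IsCyclic' {F : Type*} [Field F] {n : ℕ} [NeZero n] (C : Submodule F (Fin n → F)) : Prop :=
  ∀ v ∈ C, (fun i : Fin n => v (i - 1)) ∈ C

/-- Singleton-type optimality for an `[n,k,d]` `(r,δ)`-LRC:
`d = n - k + 1 - (⌈k/r⌉ - 1)(δ - 1)`. -/
def IsOptimalParams (n k d r δ : ℕ) : Prop :=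
  (d : ℤ) = (n : ℤ) - (k : ℤ) + 1 - (⌈(k : ℚ) / (r : ℚ)⌉ - 1) * ((δ : ℤ) - 1)

/-- The polynomial `∑ i, v i * X ^ i` attached to a word `v`. -/
noncomputable def wordPoly {F : Type*} [Field F] {n : ℕ} : (Fin n → F) →ₗ[F] F[X] :=
  (degreeLT F n).subtype ∘ₗ (degreeLTEquiv F n).symm.toLinearMap

lemma wordPoly_apply {F : Type*} [Field F] {n : ℕ} (v : Fin n → F) :
    wordPoly v = ∑ i : Fin n, C (v i) * X ^ (i : ℕ) := by
  simp [wordPoly, degreeLTEquiv, C_mul_X_pow_eq_monomial]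

lemma wordPoly_coeff {F : Type*} [Field F] {n : ℕ} {p : F[X]} (hp : p.degree < n) :
    wordPoly (fun i : Fin n => p.coeff i) = p := by
  have := (degreeLTEquiv F n).symm_apply_apply ⟨p, mem_degreeLT.2 hp⟩
  exact congrArg Subtype.val this

lemma wordPoly_mem_degreeLT {F : Type*} [Field F] {n : ℕ} (v : Fin n → F) :
    wordPoly v ∈ degreeLT F n :=
  ((degreeLTEquiv F n).symm v).2

lemma wordPoly_injective {F : Type*} [Field F] {n : ℕ} :
    Function.Injective (wordPoly : (Fin n → F) → F[X]) :=
  Subtype.val_injective.comp (degreeLTEquiv F n).symm.injective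

/-- The code of length `n` of all words whose polynomial is divisible by `g`. -/
noncomputable def polyCode {F : Type*} [Field F] (n : ℕ) (g : F[X]) : Submodule F (Fin n → F) :=
  ((Ideal.span {g}).restrictScalars F).comap wordPoly

lemma mem_polyCode {F : Type*} [Field F] {n : ℕ} {g : F[X]} {v : Fin n → F} :
    v ∈ polyCode n g ↔ g ∣ wordPoly v := by
  simp [polyCode, Ideal.mem_span_singleton]

lemma finrank_polyCode {F : Type*} [Field F] {n : ℕ} {g : F[X]} (hg : g.Monic)
    (hn : g.natDegree ≤ n) : Module.finrank F (polyCode n g) = n - g.natDegree := by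
  have hdeg (p : F[X]) : g * p ∈ degreeLT F n ↔ p ∈ degreeLT F (n - g.natDegree) := by
    rcases eq_or_ne p 0 with rfl | hp
    · simp
    · rw [mem_degreeLT, mem_degreeLT, degree_eq_natDegree hp, degree_eq_natDegree
        (mul_ne_zero hg.ne_zero hp), natDegree_mul hg.ne_zero hp]
      norm_cast
      omega
  have key : (polyCode n g).map wordPoly =
      (degreeLT F (n - g.natDegree)).map (LinearMap.mulLeft F g) := by
    ext p
    simp only [Submodule.mem_map, LinearMap.mulLeft_apply, mem_polyCode]
    constructor
    · rintro ⟨v, ⟨c, hc⟩, rfl⟩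
      exact ⟨c, (hdeg c).1 (hc ▸ wordPoly_mem_degreeLT v), hc.symm⟩
    · rintro ⟨c, hc, rfl⟩
      have h := wordPoly_coeff (mem_degreeLT.1 ((hdeg c).2 hc))
      exact ⟨_, (dvd_mul_right g c).trans h.symm.dvd, h⟩
  rw [(Submodule.equivMapOfInjective wordPoly wordPoly_injective (polyCode n g)).finrank_eq, key,
    ← (Submodule.equivMapOfInjective (LinearMap.mulLeft F g)
      (mul_right_injective₀ hg.ne_zero) _).finrank_eq,
    (degreeLTEquiv F _).finrank_eq, Module.finrank_fin_fun]

lemma X_pow_sub_C_dvd {F : Type*} [Field F] (ν k : ℕ) (b : F) :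
    X ^ ν - C b ∣ X ^ k - C (b ^ (k / ν)) * X ^ (k % ν) := by
  have h : (X : F[X]) ^ k - C (b ^ (k / ν)) * X ^ (k % ν) =
      ((X ^ ν) ^ (k / ν) - C b ^ (k / ν)) * X ^ (k % ν) := by
    rw [sub_mul, ← pow_mul, ← pow_add, Nat.div_add_mod, C_pow]
  exact h ▸ (sub_dvd_pow_sub_pow _ _ _).mul_right _

lemma isCyclic'_polyCode {F : Type*} [Field F] {n : ℕ} [NeZero n] {g : F[X]}
    (hg : g ∣ X ^ n - 1) : IsCyclic' (polyCode n g) := by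
  intro v hv
  rw [mem_polyCode] at hv ⊢
  have hshift : wordPoly (fun i : Fin n => v (i - 1)) =
      ∑ i : Fin n, C (v i) * X ^ (((i : ℕ) + 1) % n) := by
    rw [wordPoly_apply, ← Equiv.sum_comp (Equiv.addRight (1 : Fin n))]
    simp [Fin.val_add]
  have hdiff : g ∣ X * wordPoly v - wordPoly (fun i : Fin n => v (i - 1)) := by
    rw [hshift, wordPoly_apply, Finset.mul_sum, ← Finset.sum_sub_distrib]
    refine Finset.dvd_sum fun i _ => hg.trans ?_
    have h := X_pow_sub_C_dvd n (i + 1) (1 : F)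
    simp only [one_pow, C_1, one_mul] at h
    have e : X * (C (v i) * X ^ (i : ℕ)) - C (v i) * X ^ (((i : ℕ) + 1) % n) =
      C (v i) * (X ^ ((i : ℕ) + 1) - X ^ (((i : ℕ) + 1) % n)) := by ring
    exact e ▸ h.mul_left _
  exact (dvd_sub_right (hv.mul_left X)).1 hdiff

/-- Divisibility by `X ^ ν - b` gives a parity check on each residue class modulo `ν`. -/
lemma sum_residue_eq_zero {F : Type*} [Field F] {n ν a : ℕ} {b : F} {v : Fin n → F}
    (ha : a < ν) (h : X ^ ν - C b ∣ wordPoly v) :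
    ∑ j ∈ Finset.univ.filter (fun j : Fin n => (j : ℕ) % ν = a), v j * b ^ ((j : ℕ) / ν) = 0 := by
  set D : F[X] := ∑ j : Fin n, C (v j * b ^ ((j : ℕ) / ν)) * X ^ ((j : ℕ) % ν) with hD
  have hdvd : X ^ ν - C b ∣ D := by
    refine (dvd_sub_right h).1 ?_
    rw [hD, wordPoly_apply, ← Finset.sum_sub_distrib]
    refine Finset.dvd_sum fun j _ => ?_
    rw [C_mul, mul_assoc, ← mul_sub]
    exact (X_pow_sub_C_dvd ν j b).mul_left _
  have hν : ν ≠ 0 := by omega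
  have hzero : D = 0 := by
    refine eq_zero_of_dvd_of_degree_lt hdvd ?_
    rw [degree_X_pow_sub_C (Nat.pos_of_ne_zero hν)]
    refine (degree_sum_le _ _).trans_lt ((Finset.sup_lt_iff (WithBot.bot_lt_coe _)).2 fun j _ => ?_)
    exact (degree_C_mul_X_pow_le _ _).trans_lt
      (by exact_mod_cast Nat.mod_lt _ (Nat.pos_of_ne_zero hν))
  have hc := congrArg (fun p => coeff p a) hzero
  simp only [hD, finsetSum_coeff, coeff_C_mul_X_pow, coeff_zero] at hc
  simpa only [Finset.sum_filter, eq_comm (a := a)] using hc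

/-- The Vandermonde bound: a nonzero vector annihilated by the first `d` powers of distinct
nodes has at least `d + 1` nonzero entries. -/
lemma vandermonde_weight {F ι : Type*} [Field F] {S : Finset ι} {w x : ι → F} {d : ℕ}
    (hx : Set.InjOn x S) (h : ∀ l < d, ∑ i ∈ S, w i * x i ^ l = 0) {k : ι} (hk : k ∈ S)
    (hw : w k ≠ 0) : d + 1 ≤ (S.filter fun i => w i ≠ 0).card := by
  by_contra! hlt
  set T := S.filter fun i => w i ≠ 0 with hT
  have hkT : k ∈ T := Finset.mem_filter.2 ⟨hk, hw⟩
  set p : F[X] := ∏ i ∈ T.erase k, (X - C (x i)) with hp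
  have hdeg : p.natDegree < d := by
    have := Finset.card_pos.2 ⟨k, hkT⟩
    rw [hp, natDegree_prod_of_monic _ _ fun i _ => monic_X_sub_C _]
    simp [Finset.card_erase_of_mem hkT]
    omega
  have hsum : ∑ i ∈ S, w i * p.eval (x i) = 0 := by
    simp_rw [eval_eq_sum_range' hdeg, Finset.mul_sum]
    rw [Finset.sum_comm]
    refine Finset.sum_eq_zero fun l hl => ?_
    rw [← mul_zero (p.coeff l), ← h l (Finset.mem_range.1 hl), Finset.mul_sum]
    exact Finset.sum_congr rfl fun i _ => by ring
  rw [Finset.sum_eq_single_of_mem k hk] at hsum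
  · have hpk : p.eval (x k) ≠ 0 := by
      rw [hp, eval_prod, Finset.prod_ne_zero_iff]
      intro i hi
      obtain ⟨hik, hiT⟩ := Finset.mem_erase.1 hi
      simpa [sub_eq_zero] using
        fun e => hik (hx (Finset.mem_filter.1 hiT).1 hk e.symm)
    exact (mul_ne_zero hw hpk) hsum
  · intro i hi hik
    by_cases hwi : w i = 0
    · simp [hwi]
    · have : p.eval (x i) = 0 := by
        rw [hp, eval_prod]
        exact Finset.prod_eq_zero
          (Finset.mem_erase.2 ⟨hik, Finset.mem_filter.2 ⟨hi, hwi⟩⟩) (by simp)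
      simp [this]

lemma exists_orderOf_eq_of_dvd_card_sub_one {F : Type*} [Field F] [Fintype F] {m : ℕ}
    (h : m ∣ Fintype.card F - 1) : ∃ β : F, orderOf β = m := by
  obtain ⟨g, hg⟩ := IsCyclic.exists_ofOrder_eq_natCard (α := Fˣ)
  rw [Nat.card_eq_fintype_card, Fintype.card_units] at hg
  have hpos : orderOf g ≠ 0 := (orderOf_pos g).ne'
  rw [← hg] at h
  refine ⟨((g ^ (orderOf g / m) : Fˣ) : F), ?_⟩
  rw [orderOf_units, orderOf_pow_orderOf_div hpos h]

/-- The generator polynomial `(X - 1) ∏_{1 ≤ l < δ} (X ^ ν - β ^ l)`. -/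
noncomputable def genPoly {F : Type*} [Field F] (β : F) (ν δ : ℕ) : F[X] :=
  (X - C 1) * ∏ l ∈ Finset.Ico 1 δ, (X ^ ν - C (β ^ l))

lemma monic_genPoly {F : Type*} [Field F] (β : F) {ν : ℕ} (δ : ℕ) (hν : ν ≠ 0) :
    (genPoly β ν δ).Monic :=
  (monic_X_sub_C 1).mul (monic_prod_of_monic _ _ fun _ _ => monic_X_pow_sub_C _ hν)

lemma natDegree_genPoly {F : Type*} [Field F] (β : F) {ν : ℕ} (δ : ℕ) (hν : ν ≠ 0) :
    (genPoly β ν δ).natDegree = 1 + (δ - 1) * ν := by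
  rw [genPoly, (monic_X_sub_C 1).natDegree_mul
    (monic_prod_of_monic _ _ fun _ _ => monic_X_pow_sub_C _ hν),
    natDegree_prod_of_monic _ _ fun _ _ => monic_X_pow_sub_C _ hν]
  simp only [natDegree_X_sub_C, natDegree_X_pow_sub_C]
  simp

/-- The polynomial `∏_{l < δ} (X - β ^ l)`. -/
noncomputable def powRootsPoly {F : Type*} [Field F] (β : F) (δ : ℕ) : F[X] :=
  ∏ l ∈ Finset.range δ, (X - C (β ^ l))

lemma monic_powRootsPoly {F : Type*} [Field F] (β : F) (δ : ℕ) : (powRootsPoly β δ).Monic :=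
  monic_prod_of_monic _ _ fun _ _ => monic_X_sub_C _

lemma natDegree_powRootsPoly {F : Type*} [Field F] (β : F) (δ : ℕ) :
    (powRootsPoly β δ).natDegree = δ := by
  rw [powRootsPoly, natDegree_prod_of_monic _ _ fun _ _ => monic_X_sub_C _]
  simp only [natDegree_X_sub_C]
  simp

lemma genPoly_dvd_expand {F : Type*} [Field F] (β : F) (ν : ℕ) {δ : ℕ} (hδ : 1 ≤ δ) :
    genPoly β ν δ ∣ expand F ν (powRootsPoly β δ) := by
  have h : expand F ν (powRootsPoly β δ) =
      (X ^ ν - 1) * ∏ l ∈ Finset.Ico 1 δ, (X ^ ν - C (β ^ l)) := by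
    rw [powRootsPoly, map_prod, Finset.range_eq_Ico, Finset.prod_eq_prod_Ico_succ_bot hδ]
    simp
  rw [h, genPoly, C_1]
  exact mul_dvd_mul_right (sub_one_dvd_pow_sub_one X ν) _

lemma powRootsPoly_dvd {F : Type*} [Field F] {β : F} {δ : ℕ} (hδ : δ ≤ orderOf β) :
    powRootsPoly β δ ∣ X ^ orderOf β - 1 := by
  refine Finset.prod_dvd_of_coprime ?_ ?_
  · intro i hi j hj hij
    refine isCoprime_X_sub_C_of_isUnit_sub (sub_ne_zero.2 fun e => hij ?_).isUnit
    simp only [Finset.coe_range, Set.mem_Iio] at hi hj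
    exact pow_injOn_Iio_orderOf (by simp; omega) (by simp; omega) e
  · intro l _
    rw [dvd_iff_isRoot]
    simp [pow_right_comm β l, pow_orderOf_eq_one]

lemma genPoly_dvd_X_pow_sub_one {F : Type*} [Field F] {β : F} {ν δ : ℕ} (hδ : 1 ≤ δ)
    (hβ : δ ≤ orderOf β) : genPoly β ν δ ∣ X ^ (ν * orderOf β) - 1 := by
  have h := map_dvd (expand F ν) (powRootsPoly_dvd hβ)
  simp only [map_sub, map_pow, expand_X, map_one, ← pow_mul] at h
  exact (genPoly_dvd_expand β ν hδ).trans h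

section Weights

variable {F : Type*} [Field F] {β : F} {ν δ n : ℕ} {v : Fin n → F}

lemma injOn_pow_div (hn : n = ν * orderOf β) (a : ℕ) :
    Set.InjOn (fun j : Fin n => β ^ ((j : ℕ) / ν))
      (Finset.univ.filter fun j : Fin n => (j : ℕ) % ν = a) := by
  intro i hi j hj e
  have hlt (k : Fin n) : (k : ℕ) / ν < orderOf β := Nat.div_lt_of_lt_mul (hn ▸ k.2)
  have hdiv := pow_injOn_Iio_orderOf (hlt i) (hlt j) e
  simp only [Finset.coe_filter, Finset.mem_univ, true_and, Set.mem_ofPred_eq] at hi hj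
  rw [Fin.ext_iff, ← Nat.div_add_mod (i : ℕ) ν, ← Nat.div_add_mod (j : ℕ) ν, hdiv, hi, hj]

lemma card_residue_le (hn : n = ν * orderOf β) (a : ℕ) :
    (Finset.univ.filter fun j : Fin n => (j : ℕ) % ν = a).card ≤ orderOf β := by
  rw [← Finset.card_range (orderOf β)]
  refine Finset.card_le_card_of_injOn (fun j : Fin n => (j : ℕ) / ν) (fun j _ => ?_) ?_
  · simpa using Nat.div_lt_of_lt_mul (hn ▸ j.2)
  · intro i hi j hj e
    exact injOn_pow_div hn a hi hj (congrArg (β ^ ·) e)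

lemma sum_residue_pow_eq_zero {a l : ℕ} (hv : v ∈ polyCode n (genPoly β ν δ))
    (ha : a < ν) (hl : 1 ≤ l) (hlδ : l < δ) :
    ∑ j ∈ Finset.univ.filter (fun j : Fin n => (j : ℕ) % ν = a), v j * (β ^ ((j : ℕ) / ν)) ^ l = 0 := by
  have hdvd : X ^ ν - C (β ^ l) ∣ wordPoly v :=
    ((Finset.dvd_prod_of_mem _ (Finset.mem_Ico.2 ⟨hl, hlδ⟩)).mul_left _).trans
      (mem_polyCode.1 hv)
  simpa only [← pow_mul, mul_comm l] using sum_residue_eq_zero ha hdvd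

lemma local_weight_ge (hn : n = ν * orderOf β) (hν : ν ≠ 0) (hβ : β ≠ 0) (hδ : 1 ≤ δ)
    (hv : v ∈ polyCode n (genPoly β ν δ)) {k : Fin n} (hk : v k ≠ 0) :
    δ ≤ ((Finset.univ.filter fun j : Fin n => (j : ℕ) % ν = k % ν).filter
      fun j => v j ≠ 0).card := by
  have h := vandermonde_weight (w := fun j => v j * β ^ ((j : ℕ) / ν)) (d := δ - 1)
    (injOn_pow_div hn (k % ν)) (fun l hl => ?_) (k := k) (by simp)
    (mul_ne_zero hk (pow_ne_zero _ hβ))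
  · simpa [hβ, Nat.sub_add_cancel hδ] using h
  · have := sum_residue_pow_eq_zero hv (Nat.mod_lt (k : ℕ) (Nat.pos_of_ne_zero hν))
      (Nat.le_add_left 1 l) (by omega)
    simpa only [pow_succ', mul_assoc] using this

lemma minDistGe_polyCode_genPoly (hn : n = ν * orderOf β) (hν : ν ≠ 0) (hβ : β ≠ 0)
    (hδ : 1 ≤ δ) : MinDistGe (polyCode n (genPoly β ν δ) : Set (Fin n → F)) (δ + 1) := by
  intro v hv hv0
  obtain ⟨k, hk⟩ := Function.ne_iff.1 hv0
  set R := Finset.univ.filter fun j : Fin n => (j : ℕ) % ν = k % ν with hR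
  have hsub : R.filter (fun j => v j ≠ 0) ⊆ Finset.univ.filter fun j => v j ≠ 0 :=
    Finset.filter_subset_filter _ (Finset.subset_univ _)
  by_cases hsupp : ∀ j, v j ≠ 0 → j ∈ R
  · refine le_trans ?_ (Finset.card_le_card hsub)
    refine vandermonde_weight (injOn_pow_div hn (k % ν)) (fun l hl => ?_)
      (k := k) (Finset.mem_filter.2 ⟨Finset.mem_univ k, rfl⟩) hk
    rcases Nat.eq_zero_or_pos l with rfl | hl0
    · have hroot : (wordPoly v).eval 1 = 0 :=
        dvd_iff_isRoot.1 ((dvd_mul_right _ _).trans (mem_polyCode.1 hv))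
      rw [wordPoly_apply, eval_finsetSum] at hroot
      simp only [eval_mul, eval_C, eval_pow, eval_X, one_pow, mul_one] at hroot
      simp only [pow_zero, mul_one]
      rw [← hroot]
      refine Finset.sum_subset (Finset.subset_univ _) fun j _ hj => ?_
      by_contra hvj
      exact hj (hsupp j hvj)
    · exact sum_residue_pow_eq_zero hv (Nat.mod_lt _ (Nat.pos_of_ne_zero hν)) hl0 hl
  · push Not at hsupp
    obtain ⟨j, hj, hjR⟩ := hsupp
    refine (local_weight_ge hn hν hβ hδ hv hk).trans_lt (Finset.card_lt_card ?_)
    exact Finset.ssubset_iff_subset_ne.2 ⟨hsub, fun e => hjR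
      (Finset.mem_filter.1 (e ▸ Finset.mem_filter.2 ⟨Finset.mem_univ j, hj⟩)).1⟩

lemma wt_coeff_expand_le (hν : ν ≠ 0) (p : F[X]) :
    wt (fun i : Fin n => (expand F ν p).coeff i) ≤ p.natDegree + 1 := by
  rw [wt, ← Finset.card_range (p.natDegree + 1)]
  have hdvd {i : Fin n} (hi : (expand F ν p).coeff i ≠ 0) :
      ν ∣ (i : ℕ) ∧ p.coeff (i / ν) ≠ 0 := by
    rw [coeff_expand (Nat.pos_of_ne_zero hν)] at hi
    split_ifs at hi with h
    exacts [⟨h, hi⟩, (hi rfl).elim]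
  refine Finset.card_le_card_of_injOn (fun i : Fin n => (i : ℕ) / ν) ?_ ?_
  · intro i hi
    simpa [Nat.lt_succ_iff] using le_natDegree_of_ne_zero (hdvd (Finset.mem_filter.1 hi).2).2
  · intro i hi j hj e
    have hi := (hdvd (Finset.mem_filter.1 hi).2).1
    have hj := (hdvd (Finset.mem_filter.1 hj).2).1
    exact Fin.ext ((Nat.div_left_inj hi hj).1 e)

lemma minDistIs_polyCode_genPoly (hn : n = ν * orderOf β) (hν : ν ≠ 0) (hβ : β ≠ 0)
    (hδ : 1 ≤ δ) (hlt : δ < orderOf β) :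
    MinDistIs (polyCode n (genPoly β ν δ) : Set (Fin n → F)) (δ + 1) := by
  have hmin := minDistGe_polyCode_genPoly hn hν hβ hδ
  refine ⟨hmin, ?_⟩
  set p := expand F ν (powRootsPoly β δ) with hp
  have hp0 : p ≠ 0 :=
    (expand_ne_zero (Nat.pos_of_ne_zero hν)).2 (monic_powRootsPoly β δ).ne_zero
  have hdeg : p.degree < n := by
    rw [degree_eq_natDegree hp0, hp, natDegree_expand, natDegree_powRootsPoly, hn, mul_comm ν]
    exact_mod_cast Nat.mul_lt_mul_of_pos_right hlt (Nat.pos_of_ne_zero hν)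
  have hword := wordPoly_coeff hdeg
  have hmem : (fun i : Fin n => p.coeff i) ∈ polyCode n (genPoly β ν δ) :=
    mem_polyCode.2 ((genPoly_dvd_expand β ν hδ).trans hword.symm.dvd)
  have hne : (fun i : Fin n => p.coeff i) ≠ 0 := by
    intro h
    rw [h, map_zero] at hword
    exact hp0 hword.symm
  refine ⟨_, hmem, hne, le_antisymm ?_ (hmin _ hmem hne)⟩
  simpa only [natDegree_powRootsPoly] using wt_coeff_expand_le hν (powRootsPoly β δ)

lemma hasLocality_polyCode_genPoly {r : ℕ} (hn : n = ν * orderOf β) (hν : ν ≠ 0) (hβ : β ≠ 0)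
    (hδ : 1 ≤ δ) (hr : orderOf β = r + δ - 1) :
    HasLocality (polyCode n (genPoly β ν δ) : Set (Fin n → F)) r δ := by
  intro i
  refine ⟨Finset.univ.filter fun j : Fin n => (j : ℕ) % ν = i % ν, by simp,
    hr ▸ card_residue_le hn _, ?_⟩
  rintro v hv ⟨k, hk, hvk⟩
  rw [← (Finset.mem_filter.1 hk).2]
  exact local_weight_ge hn hν hβ hδ hv hvk

end Weights

lemma isOptimalParams_of_eq {ν r δ : ℕ} (hν : ν ≠ 0) (hr : 2 ≤ r) (hδ : 1 ≤ δ) :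
    IsOptimalParams (ν * (r + δ - 1)) (r * ν - 1) (δ + 1) r δ := by
  have hpos : 1 ≤ r * ν := Nat.mul_pos (by omega) (Nat.pos_of_ne_zero hν)
  have hr' : (2 : ℚ) ≤ r := by exact_mod_cast hr
  have hceil : ⌈((r * ν - 1 : ℕ) : ℚ) / (r : ℚ)⌉ = ν := by
    rw [Int.ceil_eq_iff, lt_div_iff₀ (by linarith), div_le_iff₀ (by linarith)]
    push_cast [Nat.cast_sub hpos]
    constructor <;> linarith
  rw [IsOptimalParams, hceil, Nat.cast_sub hpos, Nat.add_sub_assoc hδ]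
  push_cast [Nat.cast_sub hδ]
  ring

/-- **Theorem 1 / main result (i).** If `gcd(n,q) = 1` and `r, δ ≥ 2` with
`(r+δ-1) ∣ gcd(n, q-1)`, then there exists a `q`-ary optimal cyclic `(r,δ)`-LRC of
length `n`, dimension `k = rn/(r+δ-1) - 1` and minimum distance `δ + 1`, achieving the
Singleton-type bound `d = n - k + 1 - (⌈k/r⌉ - 1)(δ-1)`. -/
theorem exists_optimal_cyclic_LRC_dist_delta_add_one (F : Type*) [Field F] [Fintype F]
    (q n r δ : ℕ) (hq : Fintype.card F = q) [NeZero n] (hcop : Nat.Coprime n q)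
    (hr : 2 ≤ r) (hδ : 2 ≤ δ) (hdvd : (r + δ - 1) ∣ Nat.gcd n (q - 1)) :
    ∃ C : Submodule F (Fin n → F),
      IsCyclic' C ∧
      Module.finrank F C = r * n / (r + δ - 1) - 1 ∧
      MinDistIs (C : Set (Fin n → F)) (δ + 1) ∧
      HasLocality (C : Set (Fin n → F)) r δ ∧
      IsOptimalParams n (r * n / (r + δ - 1) - 1) (δ + 1) r δ := by
  subst hq
  obtain ⟨β, hβ⟩ := exists_orderOf_eq_of_dvd_card_sub_one (hdvd.trans (Nat.gcd_dvd_right _ _))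
  obtain ⟨ν, hn⟩ := hdvd.trans (Nat.gcd_dvd_left _ _)
  rw [mul_comm] at hn
  have hn' : n = ν * orderOf β := hβ.symm ▸ hn
  have hν : ν ≠ 0 := by
    rintro rfl
    exact NeZero.ne n (by simpa using hn)
  have hβ0 : β ≠ 0 := by
    rintro rfl
    rw [orderOf_zero] at hβ
    omega
  have hδ1 : 1 ≤ δ := by omega
  have hk : r * n / (r + δ - 1) = r * ν := by
    rw [hn, ← mul_assoc, Nat.mul_div_cancel _ (by omega)]
  have hsum : n = r * ν + (δ - 1) * ν := by
    rw [hn, Nat.add_sub_assoc hδ1, mul_comm, add_mul]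
  have hpos : 1 ≤ r * ν := Nat.mul_pos (by omega) (Nat.pos_of_ne_zero hν)
  refine ⟨polyCode n (genPoly β ν δ), isCyclic'_polyCode ?_, ?_,
    minDistIs_polyCode_genPoly hn' hν hβ0 hδ1 (by omega),
    hasLocality_polyCode_genPoly hn' hν hβ0 hδ1 hβ, ?_⟩
  · have h := genPoly_dvd_X_pow_sub_one (ν := ν) hδ1 (show δ ≤ orderOf β by omega)
    rwa [← hn'] at h
  · rw [finrank_polyCode (monic_genPoly β δ hν) (by rw [natDegree_genPoly β δ hν]; omega),
      natDegree_genPoly β δ hν, hk]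
    omega
  · rw [hk]
    subst hn
    exact isOptimalParams_of_eq hν hr hδ1
end

section
/- Let q be a prime power and n a positive integer with gcd(n,q)=1. Let δ ≥ 2 and r ≥ δ+1 be integers such that (r+δ-1) divides gcd(n, q-1) and gcd(n/(r+δ-1), r+δ-1) = 1. Then there exists a q-ary cyclic code C of length n, dimension k = rn/(r+δ-1) - δ, and minimum distance d = 2δ, such that C has (r,δ)-locality and d = n - k + 1 - (⌈k/r⌉ - 1)(δ - 1) (i.e., C is an optimal (r,δ)-LRC achieving the Singleton-type bound). -/
open Polynomial
open scoped Classical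

open Finset in
/-- A vector that is nonzero on `S` and orthogonal to the first `d` powers of distinct nodes has
more than `d` nonzero entries in `S`. -/
lemma lt_card_support_of_power_sums_eq_zero {F κ : Type*} [Field F] {S : Finset κ}
    {v χ : κ → F} {d : ℕ} (hχ : Set.InjOn χ S)
    (hv : ∀ j < d, ∑ i ∈ S, v i * χ i ^ j = 0) (hne : ∃ i ∈ S, v i ≠ 0) :
    d < (S.filter (fun i => v i ≠ 0)).card := by
  by_contra! hle
  obtain ⟨i₀, hi₀, hvi₀⟩ := hne
  set T := S.filter (fun i => v i ≠ 0) with hT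
  have hi₀T : i₀ ∈ T := by simp [hT, hi₀, hvi₀]
  set p : F[X] := ∏ i ∈ T.erase i₀, (X - C (χ i)) with hp
  have hdeg : p.natDegree < d := by
    rw [hp, natDegree_prod_of_monic _ _ (fun i _ => monic_X_sub_C _)]
    simp only [natDegree_X_sub_C, sum_const, smul_eq_mul, mul_one, card_erase_of_mem hi₀T]
    have := card_pos.mpr ⟨i₀, hi₀T⟩
    omega
  have hsum : ∑ i ∈ S, v i * p.eval (χ i) = 0 := by
    simp_rw [eval_eq_sum_range' hdeg, mul_sum]
    rw [sum_comm]
    refine sum_eq_zero fun j hj => ?_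
    rw [← mul_zero (p.coeff j), ← hv j (mem_range.mp hj), mul_sum]
    exact sum_congr rfl fun i _ => by ring
  rw [sum_eq_single_of_mem i₀ hi₀] at hsum
  · rcases mul_eq_zero.mp hsum with h | h
    · exact hvi₀ h
    · rw [hp, eval_prod, prod_eq_zero_iff] at h
      obtain ⟨i, hi, h⟩ := h
      rw [mem_erase, hT, mem_filter] at hi
      simp only [eval_sub, eval_X, eval_C, sub_eq_zero] at h
      exact hi.1 (hχ hi.2.1 hi₀ h.symm)
  · intro i hi hne
    by_cases hvi : v i = 0
    · simp [hvi]
    · rw [hp, eval_prod, prod_eq_zero (i := i) (by simp [hT, hi, hvi, hne]) (by simp), mul_zero]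

/-- The parity-check matrix with `e` power-sum checks on each fibre of `ρ` and the `e + 1` next
power-sum checks on all coordinates. -/
noncomputable def fibrePowerCheck {F κ ι : Type*} [Field F] [DecidableEq ι] (ρ : κ → ι)
    (χ : κ → F) (e : ℕ) : Matrix ((ι × Fin e) ⊕ Fin (e + 1)) κ F
  | Sum.inl p, i => if ρ i = p.1 then χ i ^ (p.2 : ℕ) else 0
  | Sum.inr j, i => χ i ^ (e + (j : ℕ))

/-- The code with parity-check matrix `fibrePowerCheck ρ χ e`. -/
noncomputable def fibrePowerCode {F κ ι : Type*} [Field F] [Fintype κ] [DecidableEq ι]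
    (ρ : κ → ι) (χ : κ → F) (e : ℕ) : Submodule F (κ → F) :=
  LinearMap.ker (fibrePowerCheck ρ χ e).mulVecLin

section FibrePowerCode

variable {F κ ι : Type*} [Field F] [Fintype κ] [Fintype ι] [DecidableEq ι] {ρ : κ → ι}
  {χ : κ → F} {e : ℕ}

open Finset in
lemma mem_fibrePowerCode {v : κ → F} :
    v ∈ fibrePowerCode ρ χ e ↔
      (∀ a, ∀ j < e, ∑ i with ρ i = a, v i * χ i ^ j = 0) ∧
        ∀ j < 2 * e + 1, ∑ i, v i * χ i ^ j = 0 := by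
  have key : v ∈ fibrePowerCode ρ χ e ↔
      (∀ a, ∀ j < e, ∑ i with ρ i = a, v i * χ i ^ j = 0) ∧
        ∀ j < e + 1, ∑ i, v i * χ i ^ (e + j) = 0 := by
    simp only [fibrePowerCode, LinearMap.mem_ker, Matrix.mulVecLin_apply, funext_iff, Sum.forall,
      Prod.forall, Fin.forall_iff, Matrix.mulVec, dotProduct, fibrePowerCheck,
      Pi.zero_apply, mul_ite, mul_zero, sum_filter, mul_comm]
  rw [key]
  refine and_congr_right fun h => ⟨fun h' j hj => ?_, fun h' j hj => h' _ (by omega)⟩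
  rcases lt_or_ge j e with hje | hje
  · rw [← sum_fiberwise univ ρ]
    exact sum_eq_zero fun a _ => h a j hje
  · obtain ⟨k, rfl⟩ := Nat.exists_eq_add_of_le hje
    exact h' k (by omega)

open Finset in
/-- Distinct coordinates in a fibre have distinct nodes, so each fibre of a codeword is either zero
or of weight more than `e`. -/
lemma fibrePowerCode_lt_card_fibre (hinj : ∀ i j, ρ i = ρ j → χ i = χ j → i = j)
    {v : κ → F} (hv : v ∈ fibrePowerCode ρ χ e) {a : ι} (hne : ∃ i, ρ i = a ∧ v i ≠ 0) :
    e < ((univ.filter (fun i => ρ i = a)).filter (fun i => v i ≠ 0)).card := by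
  refine lt_card_support_of_power_sums_eq_zero (χ := χ) ?_ ((mem_fibrePowerCode.mp hv).1 a) ?_
  · intro i hi j hj h
    simp only [coe_filter, mem_univ, true_and, Set.mem_ofPred_eq] at hi hj
    exact hinj i j (hi.trans hj.symm) h
  · simpa using hne

open Finset in
lemma fibrePowerCode_le_card_support (hinj : ∀ i j, ρ i = ρ j → χ i = χ j → i = j)
    {v : κ → F} (hv : v ∈ fibrePowerCode ρ χ e) (hne : v ≠ 0) :
    2 * (e + 1) ≤ (univ.filter (fun i => v i ≠ 0)).card := by
  obtain ⟨i₀, hi₀⟩ := Function.ne_iff.mp hne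
  rw [Pi.zero_apply] at hi₀
  -- the folded word, indexed by the nodes
  set s : F → F := fun x => ∑ i with χ i = x, v i with hs
  by_cases hs0 : ∃ x ∈ univ.image χ, s x ≠ 0
  · have hlt : 2 * e + 1 < ((univ.image χ).filter (fun x => s x ≠ 0)).card := by
      refine lt_card_support_of_power_sums_eq_zero (χ := id) (Set.injOn_id _) (fun j hj => ?_) hs0
      rw [← (mem_fibrePowerCode.mp hv).2 j hj,
        ← sum_fiberwise_of_maps_to (t := univ.image χ) (g := χ) (by simp)]
      refine sum_congr rfl fun x _ => ?_
      rw [hs, sum_mul]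
      exact sum_congr rfl fun i hi => by simp [(mem_filter.mp hi).2]
    have hsub : (univ.image χ).filter (fun x => s x ≠ 0) ⊆
        (univ.filter (fun i => v i ≠ 0)).image χ := by
      intro x hx
      obtain ⟨i, hi, hvi⟩ := exists_ne_zero_of_sum_ne_zero (mem_filter.mp hx).2
      exact mem_image.mpr ⟨i, by simpa using hvi, (mem_filter.mp hi).2⟩
    have := (card_le_card hsub).trans card_image_le
    omega
  · push Not at hs0
    have h0 : ∑ i with χ i = χ i₀, v i = 0 := hs0 (χ i₀) (by simp)
    obtain ⟨i₁, hi₁, hne₁, hv₁⟩ : ∃ i₁, χ i₁ = χ i₀ ∧ i₁ ≠ i₀ ∧ v i₁ ≠ 0 := by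
      by_contra! hcon
      rw [sum_eq_single_of_mem i₀ (by simp)
        (fun i hi hne => hcon i (mem_filter.mp hi).2 hne)] at h0
      exact hi₀ h0
    have hρ : ρ i₁ ≠ ρ i₀ := fun h => hne₁ (hinj _ _ h hi₁)
    have c₀ := fibrePowerCode_lt_card_fibre hinj hv ⟨i₀, rfl, hi₀⟩
    have c₁ := fibrePowerCode_lt_card_fibre hinj hv ⟨i₁, rfl, hv₁⟩
    have hdisj : Disjoint ((univ.filter (fun i => ρ i = ρ i₀)).filter (fun i => v i ≠ 0))
        ((univ.filter (fun i => ρ i = ρ i₁)).filter (fun i => v i ≠ 0)) := by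
      rw [disjoint_left]
      intro i h h'
      simp only [mem_filter, mem_univ, true_and] at h h'
      exact hρ (h'.1.symm.trans h.1)
    have hle := card_le_card (union_subset
      (filter_subset_filter (fun i => v i ≠ 0) (filter_subset (fun i => ρ i = ρ i₀) univ))
      (filter_subset_filter (fun i => v i ≠ 0) (filter_subset (fun i => ρ i = ρ i₁) univ)))
    rw [card_union_of_disjoint hdisj] at hle
    omega

open Finset in
/-- If some fibre has at least `2 * (e + 1)` coordinates, then the code has a nonzero word with at
most `2 * (e + 1)` nonzero entries. -/
lemma exists_mem_fibrePowerCode_card_support_le {a : ι}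
    (ha : 2 * (e + 1) ≤ (univ.filter (fun i => ρ i = a)).card) :
    ∃ v ∈ fibrePowerCode ρ χ e, v ≠ 0 ∧
      (univ.filter (fun i => v i ≠ 0)).card ≤ 2 * (e + 1) := by
  obtain ⟨T, hTa, hT⟩ := exists_subset_card_eq ha
  let f : (κ → F) →ₗ[F] (Fin (2 * e + 1) → F) × ({i // i ∉ T} → F) :=
    (Matrix.mulVecLin (Matrix.of fun (j : Fin (2 * e + 1)) i => χ i ^ (j : ℕ))).prod
      (LinearMap.funLeft F F Subtype.val)
  have hker : LinearMap.ker f ≠ ⊥ := by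
    apply LinearMap.ker_ne_bot_of_finrank_lt
    have hc := card_le_univ T
    simp only [Module.finrank_prod, Module.finrank_fintype_fun_eq_card, Fintype.card_fin,
      Fintype.card_subtype_compl, Fintype.card_coe]
    omega
  obtain ⟨v, hv, hv0⟩ := Submodule.exists_mem_ne_zero_of_ne_bot hker
  simp only [f, LinearMap.mem_ker, LinearMap.prod_apply, Function.prod_apply, Prod.mk_eq_zero,
    funext_iff, Matrix.mulVecLin_apply, Fin.forall_iff, Matrix.mulVec, dotProduct, Matrix.of_apply,
    Pi.zero_apply, LinearMap.funLeft_apply, Subtype.forall, mul_comm _ (v _)] at hv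
  obtain ⟨hpow, hout⟩ := hv
  refine ⟨v, mem_fibrePowerCode.mpr ⟨fun b j hj => ?_, hpow⟩, hv0, ?_⟩
  · by_cases hb : b = a
    · rw [← hpow j (by omega), hb]
      refine sum_subset (subset_univ _) fun i _ hi => ?_
      rw [hout i fun h => hi (hTa h), zero_mul]
    · refine sum_eq_zero fun i hi => ?_
      rw [hout i, zero_mul]
      intro h
      exact hb ((mem_filter.mp hi).2.symm.trans (mem_filter.mp (hTa h)).2)
  · rw [← hT]
    refine card_le_card fun i hi => ?_
    by_contra h
    exact (mem_filter.mp hi).2 (hout i h)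

open Finset in
lemma linearIndependent_fibrePowerCheck_row [Nonempty ι]
    (hcard : ∀ a, 2 * e + 1 ≤ (univ.filter (fun i => ρ i = a)).card)
    (hinj : ∀ i j, ρ i = ρ j → χ i = χ j → i = j) :
    LinearIndependent F (fibrePowerCheck ρ χ e).row := by
  rw [Fintype.linearIndependent_iff]
  intro g hg
  have hcoef : ∀ a, Fin.append (fun j : Fin e => g (Sum.inl (a, j)))
      (fun j : Fin (e + 1) => g (Sum.inr j)) = 0 := by
    intro a
    obtain ⟨T, hTa, hT⟩ := exists_subset_card_eq (hcard a)
    have hT' : Fintype.card T = e + (e + 1) := by rw [Fintype.card_coe, hT]; omega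
    let φ : Fin (e + (e + 1)) ≃ T := (Fintype.equivFinOfCardEq hT').symm
    have hmem : ∀ k, ρ (φ k) = a := fun k => (mem_filter.mp (hTa (φ k).2)).2
    refine Matrix.eq_zero_of_forall_index_sum_mul_pow_eq_zero
      (f := fun k => χ (φ k)) ?_ fun k => ?_
    · intro k l h
      exact φ.injective (Subtype.ext (hinj _ _ ((hmem k).trans (hmem l).symm) h))
    · have := congrFun hg (φ k)
      simp only [Fintype.sum_sum_type, Fintype.sum_prod_type, Finset.sum_apply,
        Pi.smul_apply, smul_eq_mul, fibrePowerCheck, Matrix.row, hmem, Pi.zero_apply] at this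
      rw [Fintype.sum_eq_single a (fun b hb => by simp [hb.symm])] at this
      simpa [Fin.sum_univ_add] using this
  rintro (⟨a, j⟩ | j)
  · simpa using congrFun (hcoef a) (Fin.castAdd _ j)
  · simpa using congrFun (hcoef (Classical.arbitrary ι)) (Fin.natAdd _ j)

lemma finrank_fibrePowerCode [Nonempty ι]
    (hcard : ∀ a, 2 * e + 1 ≤ (Finset.univ.filter (fun i => ρ i = a)).card)
    (hinj : ∀ i j, ρ i = ρ j → χ i = χ j → i = j) :
    Module.finrank F (fibrePowerCode ρ χ e) =
      Fintype.card κ - (Fintype.card ι * e + (e + 1)) := by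
  have h := (fibrePowerCheck ρ χ e).mulVecLin.finrank_range_add_finrank_ker
  have hrank := (linearIndependent_fibrePowerCheck_row hcard hinj).rank_matrix
  rw [Matrix.rank] at hrank
  rw [hrank, Module.finrank_fintype_fun_eq_card] at h
  simp only [Fintype.card_sum, Fintype.card_prod, Fintype.card_fin] at h
  rw [fibrePowerCode]
  omega

open Finset in
/-- If the coordinate permutation `σ` permutes the fibres of `ρ` and scales the nodes by `β`, then
the code is invariant under `σ`. -/
lemma comp_symm_mem_fibrePowerCode (σ : Equiv.Perm κ) (τ : Equiv.Perm ι) (β : F)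
    (hρ : ∀ i, ρ (σ i) = τ (ρ i)) (hχ : ∀ i, χ (σ i) = β * χ i) {v : κ → F}
    (hv : v ∈ fibrePowerCode ρ χ e) : v ∘ σ.symm ∈ fibrePowerCode ρ χ e := by
  rw [mem_fibrePowerCode] at hv ⊢
  refine ⟨fun a j hj => ?_, fun j hj => ?_⟩
  · have h := congrArg (β ^ j * ·) (hv.1 (τ.symm a) j hj)
    simp only [mul_zero, sum_filter, mul_sum] at h
    rw [sum_filter, ← Equiv.sum_comp σ]
    refine (sum_congr rfl fun i _ => ?_).trans h
    simp only [hρ, hχ, Function.comp_apply, Equiv.symm_apply_apply, Equiv.eq_symm_apply, mul_pow]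
    split_ifs <;> ring
  · rw [← Equiv.sum_comp σ, ← mul_zero (β ^ j), ← hv.2 j hj, mul_sum]
    refine sum_congr rfl fun i _ => ?_
    simp only [hχ, Function.comp_apply, Equiv.symm_apply_apply, mul_pow]
    ring

end FibrePowerCode

lemma exists_isPrimitiveRoot_of_dvd_card_sub_one (F : Type*) [Field F] [Fintype F] {l : ℕ}
    (hl : l ∣ Fintype.card F - 1) : ∃ β : F, IsPrimitiveRoot β l := by
  obtain ⟨g, hg⟩ := IsCyclic.exists_ofOrder_eq_natCard (α := Fˣ)
  rw [Nat.card_units, Nat.card_eq_fintype_card] at hg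
  obtain ⟨c, hc⟩ := hl
  have hpos : 0 < Fintype.card F - 1 := Nat.sub_pos_of_lt Fintype.one_lt_card
  have hprim : IsPrimitiveRoot (g : F) (Fintype.card F - 1) :=
    IsPrimitiveRoot.coe_units_iff.mpr (hg ▸ IsPrimitiveRoot.orderOf g)
  exact ⟨_, hprim.pow hpos (hc.trans (mul_comm _ _))⟩

open Finset in
/-- Each residue class modulo `m` has `l` elements in `Fin (m * l)`. -/
lemma card_fibre_natCast_zmod {n m l : ℕ} [NeZero m] (hn : n = m * l)
    (a : ZMod m) : (univ.filter (fun i : Fin n => ((i : ℕ) : ZMod m) = a)).card = l := by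
  subst hn
  have h := Nat.count_modEq_card (m * l) (NeZero.pos m) a.val
  rw [Nat.mul_mod_right, Nat.mul_div_cancel_left _ (NeZero.pos m), if_neg (by omega), add_zero,
    Nat.count_eq_card_filter_range] at h
  refine Eq.trans ?_ h
  rw [← card_map Fin.valEmbedding]
  congr 1
  ext x
  simp only [mem_map, mem_filter, mem_univ, true_and, Fin.valEmbedding_apply, mem_range]
  constructor
  · rintro ⟨i, hi, rfl⟩
    exact ⟨i.2, by rw [← ZMod.natCast_eq_natCast_iff, hi, ZMod.natCast_zmod_val]⟩
  · rintro ⟨hx, hxa⟩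
    refine ⟨⟨x, hx⟩, ?_, rfl⟩
    rw [← ZMod.natCast_eq_natCast_iff, ZMod.natCast_zmod_val] at hxa
    exact hxa

lemma isOptimalParams_two_mul_succ {m r e : ℕ} (hm : 0 < m) (hr : e + 2 ≤ r) :
    IsOptimalParams (m * (r + e)) (r * m - (e + 1)) (2 * (e + 1)) r (e + 1) := by
  have hle : e + 1 ≤ r * m := by nlinarith
  have hr0 : (0 : ℚ) < r := by exact_mod_cast (by omega : 0 < r)
  have hre : (e : ℚ) + 2 ≤ r := by exact_mod_cast hr
  have hceil : ⌈((r * m - (e + 1) : ℕ) : ℚ) / (r : ℚ)⌉ = (m : ℤ) := by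
    rw [Int.ceil_eq_iff, lt_div_iff₀ hr0, div_le_iff₀ hr0]
    push_cast [Nat.cast_sub hle]
    constructor <;> nlinarith
  rw [IsOptimalParams, hceil]
  push_cast [Nat.cast_sub hle]
  ring

/-- **Theorem 3 / main result (iii).** If `gcd(n,q) = 1`, `δ ≥ 2`, `r ≥ δ + 1`,
`(r+δ-1) ∣ gcd(n, q-1)` and `gcd(n/(r+δ-1), r+δ-1) = 1`, then there exists a `q`-ary
optimal cyclic `(r,δ)`-LRC of length `n`, dimension `k = rn/(r+δ-1) - δ` and minimum
distance `2δ`, achieving the Singleton-type bound. -/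
theorem exists_optimal_cyclic_LRC_dist_two_delta (F : Type*) [Field F] [Fintype F]
    (q n r δ : ℕ) (hq : Fintype.card F = q) [NeZero n] (hcop : Nat.Coprime n q)
    (hδ : 2 ≤ δ) (hr : δ + 1 ≤ r) (hdvd : (r + δ - 1) ∣ Nat.gcd n (q - 1))
    (hgcd : Nat.gcd (n / (r + δ - 1)) (r + δ - 1) = 1) :
    ∃ C : Submodule F (Fin n → F),
      IsCyclic' C ∧
      Module.finrank F C = r * n / (r + δ - 1) - δ ∧
      MinDistIs (C : Set (Fin n → F)) (2 * δ) ∧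
      HasLocality (C : Set (Fin n → F)) r δ ∧
      IsOptimalParams n (r * n / (r + δ - 1) - δ) (2 * δ) r δ := by
  obtain ⟨e, rfl⟩ : ∃ e, δ = e + 1 := ⟨δ - 1, by omega⟩
  rw [show r + (e + 1) - 1 = r + e by omega] at *
  have hl0 : 0 < r + e := by omega
  obtain ⟨m, hn⟩ := hdvd.trans (Nat.gcd_dvd_left _ _)
  rw [mul_comm] at hn
  have hn0 : 0 < n := NeZero.pos n
  have hm0 : 0 < m := Nat.pos_of_ne_zero fun h => by simp [h] at hn; omega
  have hdim : r * n / (r + e) = r * m := by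
    rw [hn, ← mul_assoc, Nat.mul_div_cancel _ hl0]
  have hcopml : Nat.Coprime m (r + e) := by
    rwa [hn, Nat.mul_div_cancel _ hl0] at hgcd
  have : NeZero m := ⟨hm0.ne'⟩
  obtain ⟨β, hβ⟩ := exists_isPrimitiveRoot_of_dvd_card_sub_one F
    (hq ▸ hdvd.trans (Nat.gcd_dvd_right _ _))
  set ρ : Fin n → ZMod m := fun i => ((i : ℕ) : ZMod m) with hρ
  set χ : Fin n → F := fun i => β ^ (i : ℕ) with hχ
  have hcard : ∀ a, (Finset.univ.filter (fun i => ρ i = a)).card = r + e :=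
    card_fibre_natCast_zmod hn
  have hinj : ∀ i j, ρ i = ρ j → χ i = χ j → i = j := by
    intro i j h₁ h₂
    have h₁' : (i : ℕ) ≡ j [MOD m] := (ZMod.natCast_eq_natCast_iff _ _ _).mp h₁
    have h₂' : (i : ℕ) ≡ j [MOD (r + e)] := by
      have h := (hβ.isOfFinOrder hl0.ne').pow_inj_mod.mp h₂
      rwa [← hβ.eq_orderOf] at h
    have h := (Nat.modEq_and_modEq_iff_modEq_mul hcopml).mp ⟨h₁', h₂'⟩
    rw [← hn] at h
    exact Fin.ext (h.eq_of_lt_of_lt i.2 j.2)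
  have hval : ∀ i : Fin n, ((i + 1 : Fin n) : ℕ) ≡ (i : ℕ) + 1 [MOD n] := by
    intro i
    rw [Fin.val_add, Fin.val_one', Nat.add_mod_mod]
    exact Nat.mod_modEq _ _
  refine ⟨fibrePowerCode ρ χ e, ?_, ?_, ⟨?_, ?_⟩, ?_, ?_⟩
  · intro v hv
    have hshift : (fun i : Fin n => v (i - 1)) = v ∘ (Equiv.addRight (1 : Fin n)).symm := by
      ext i
      simp [sub_eq_add_neg]
    rw [hshift]
    refine comp_symm_mem_fibrePowerCode (Equiv.addRight (1 : Fin n)) (Equiv.addRight (1 : ZMod m))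
      β (fun i => ?_) (fun i => ?_) hv
    · have h := (ZMod.natCast_eq_natCast_iff _ _ _).mpr
        ((hval i).of_dvd (hn ▸ Nat.dvd_mul_right m (r + e)))
      simpa [hρ] using h
    · have h := (hval i).of_dvd (hn ▸ Nat.dvd_mul_left (r + e) m)
      simpa [hχ, pow_succ'] using pow_eq_pow_of_modEq h hβ.pow_eq_one
  · have hcard' : ∀ a, 2 * e + 1 ≤ (Finset.univ.filter (fun i => ρ i = a)).card := by
      intro a
      rw [hcard]
      omega
    have hn' : n = r * m + m * e := by rw [hn]; ring
    rw [finrank_fibrePowerCode hcard' hinj, hdim, Fintype.card_fin, ZMod.card]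
    omega
  · exact fun v hv hne => fibrePowerCode_le_card_support hinj hv hne
  · obtain ⟨v, hv, hne, hle⟩ := exists_mem_fibrePowerCode_card_support_le (χ := χ) (e := e)
      (a := (0 : ZMod m)) (ρ := ρ) (by rw [hcard]; omega)
    exact ⟨v, hv, hne, le_antisymm hle (fibrePowerCode_le_card_support hinj hv hne)⟩
  · intro i
    refine ⟨Finset.univ.filter (fun j => ρ j = ρ i), by simp, (hcard _).le.trans (by omega),
      fun v hv hne => fibrePowerCode_lt_card_fibre hinj hv (by simpa using hne)⟩
  · rw [hdim, hn]
    exact isOptimalParams_two_mul_succ hm0 (by omega)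
end

section
/- Let q be a prime power and n an odd positive integer with gcd(n,q)=1. Let r ≥ 4 be an integer such that (r+2) divides gcd(n, q+1) and gcd(n/(r+2), r+2) = 1. Then there exists a q-ary cyclic code C of length n, dimension k = rn/(r+2) - 3, and minimum distance d = 6, such that C has (r,3)-locality and d = n - k + 1 - 2(⌈k/r⌉ - 1) (i.e., C is an optimal (r,3)-LRC achieving the Singleton-type bound). -/
open Polynomial
open scoped Classical

theorem Finset.eq_zero_of_sum_mul_pow_eq_zero {K ι : Type*} [Field K] {S : Finset ι}
    {c x : ι → K} (hx : Set.InjOn x S) (h : ∀ j < S.card, ∑ i ∈ S, c i * x i ^ j = 0) :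
    ∀ i ∈ S, c i = 0 := by
  intro i hi
  set P : K[X] := ∏ k ∈ S.erase i, (X - C (x k)) with hP
  have hdeg : P.natDegree < S.card := by
    rw [hP, natDegree_finsetProd_X_sub_C_eq_card, Finset.card_erase_of_mem hi]
    exact Nat.sub_lt (Finset.card_pos.2 ⟨i, hi⟩) one_pos
  have hsum : ∑ k ∈ S, c k * P.eval (x k) = 0 := by
    simp_rw [eval_eq_sum_range' hdeg, Finset.mul_sum]
    rw [Finset.sum_comm]
    refine Finset.sum_eq_zero fun j hj => ?_
    simp_rw [mul_left_comm _ (P.coeff j)]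
    rw [← Finset.mul_sum, h j (Finset.mem_range.1 hj), mul_zero]
  rw [Finset.sum_eq_single_of_mem i hi] at hsum
  · refine (mul_eq_zero.1 hsum).resolve_right ?_
    rw [hP, eval_prod]
    refine Finset.prod_ne_zero_iff.2 fun k hk => ?_
    rw [eval_sub, eval_X, eval_C, sub_ne_zero]
    exact fun he => Finset.ne_of_mem_erase hk (hx (Finset.mem_of_mem_erase hk) hi he.symm)
  · intro k hk hki
    rw [hP, eval_prod, Finset.prod_eq_zero (Finset.mem_erase.2 ⟨hki, hk⟩) (by simp), mul_zero]

theorem FiniteField.exists_quadratic_extension_primitiveRoot (F : Type*) [Field F] [Fintype F]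
    {ρ : ℕ} (hρ : ρ ∣ Fintype.card F + 1) :
    ∃ (K : Type) (_ : Field K) (_ : Algebra F K) (β : K),
      Module.finrank F K = 2 ∧ IsPrimitiveRoot β ρ := by
  obtain ⟨p, hp⟩ := CharP.exists F
  have : Fact p.Prime := ⟨CharP.char_is_prime F p⟩
  obtain ⟨g, hg⟩ := IsCyclic.exists_ofOrder_eq_natCard (α := (FiniteField.Extension F p 2)ˣ)
  have hcard : Nat.card (FiniteField.Extension F p 2)ˣ =
      (Fintype.card F + 1) * (Fintype.card F - 1) := by
    rw [Nat.card_units, FiniteField.natCard_extension, Nat.card_eq_fintype_card,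
      ← Nat.sq_sub_sq, one_pow]
  obtain ⟨t, ht⟩ : ρ ∣ Nat.card (FiniteField.Extension F p 2)ˣ :=
    hcard ▸ hρ.mul_right _
  have hroot : IsPrimitiveRoot g (Nat.card (FiniteField.Extension F p 2)ˣ) :=
    hg ▸ IsPrimitiveRoot.orderOf g
  exact ⟨FiniteField.Extension F p 2, inferInstance, inferInstance, (g ^ t : (_)ˣ),
    FiniteField.finrank_extension F p 2,
    IsPrimitiveRoot.coe_units_iff.2
      (hroot.pow Nat.card_pos (by rw [ht, mul_comm]))⟩

namespace CyclicLRC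

variable {F K : Type*} [Field F] [Field K] [Algebra F K] {n m ρ : ℕ} {β : K}

/-- The positions of `Fin n` congruent to `s` modulo `m`. -/
def block (n : ℕ) {m : ℕ} (s : ZMod m) : Finset (Fin n) :=
  Finset.univ.filter fun i => ((i : ℕ) : ZMod m) = s

theorem mem_block {s : ZMod m} {i : Fin n} : i ∈ block n s ↔ ((i : ℕ) : ZMod m) = s := by
  simp [block]

/-- The syndrome of a vector `v`: the value at `β` of each block of `v`, followed by the values
at `1` and `β ^ 2` of the whole vector. -/
noncomputable def syndrome (F : Type*) {K : Type*} [Field F] [Field K] [Algebra F K]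
    (n m : ℕ) (β : K) : (Fin n → F) →ₗ[F] (ZMod m → K) × F × K :=
  (LinearMap.pi fun s => ∑ i ∈ block n s, (LinearMap.proj i).smulRight (β ^ (i : ℕ))).prod
    ((∑ i : Fin n, LinearMap.proj i).prod (∑ i : Fin n, (LinearMap.proj i).smulRight ((β ^ 2) ^ (i : ℕ))))

/-- The code of all vectors with vanishing syndrome. -/
noncomputable def code (F : Type*) {K : Type*} [Field F] [Field K] [Algebra F K]
    (n m : ℕ) (β : K) : Submodule F (Fin n → F) :=
  LinearMap.ker (syndrome F n m β)

theorem mem_code {v : Fin n → F} : v ∈ code F n m β ↔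
    (∀ s : ZMod m, ∑ i ∈ block n s, v i • β ^ (i : ℕ) = 0) ∧ ∑ i, v i = 0 ∧
      ∑ i, v i • (β ^ 2) ^ (i : ℕ) = 0 := by
  simp [code, syndrome, funext_iff]

theorem natCast_val_add_one [NeZero n] (h : m ∣ n) (i : Fin n) :
    (((i + 1 : Fin n) : ℕ) : ZMod m) = ((i : ℕ) : ZMod m) + 1 := by
  have : ((i + 1 : Fin n) : ℕ) ≡ i + 1 [MOD n] := by
    rw [Fin.val_add, Fin.val_one', Nat.add_mod_mod]
    exact Nat.mod_modEq _ _
  exact_mod_cast (ZMod.natCast_eq_natCast_iff _ _ _).2 (this.of_dvd h)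

theorem pow_val_add_one [NeZero n] {x : K} (h : x ^ n = 1) (i : Fin n) :
    x ^ ((i + 1 : Fin n) : ℕ) = x ^ (i : ℕ) * x := by
  rw [Fin.val_add, Fin.val_one', Nat.add_mod_mod, ← pow_succ]
  exact (pow_eq_pow_mod _ h).symm

theorem sum_eq_sum_add_one {M : Type*} [AddCommMonoid M] [NeZero n] (f : Fin n → M) :
    ∑ i, f i = ∑ i, f (i + 1) :=
  (Equiv.sum_comp (Equiv.addRight (1 : Fin n)) f).symm

theorem isCyclic'_code [NeZero n] (hm : m ∣ n) (hβ : β ^ n = 1) :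
    IsCyclic' (code F n m β) := by
  intro v hv
  obtain ⟨h₁, h₂, h₃⟩ := mem_code.1 hv
  refine mem_code.2 ⟨fun s => ?_, ?_, ?_⟩
  · have := congrArg (· * β) (h₁ (s - 1))
    simp only [block, Finset.sum_filter, Finset.sum_mul, zero_mul] at this ⊢
    rw [sum_eq_sum_add_one]
    refine Eq.trans ?_ this
    refine Finset.sum_congr rfl fun i _ => ?_
    simp only [natCast_val_add_one hm, add_sub_cancel_right, pow_val_add_one hβ,
      eq_sub_iff_add_eq, ite_mul, zero_mul, smul_mul_assoc]
  · rw [sum_eq_sum_add_one]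
    simpa using h₂
  · have := congrArg (· * β ^ 2) h₃
    simp only [Finset.sum_mul, zero_mul] at this
    rw [sum_eq_sum_add_one]
    refine Eq.trans ?_ this
    refine Finset.sum_congr rfl fun i _ => ?_
    rw [pow_val_add_one (by rw [← pow_mul, mul_comm, pow_mul, hβ, one_pow]),
      add_sub_cancel_right, smul_mul_assoc]

theorem pow_injOn_block (hn : n = m * ρ) (hco : m.Coprime ρ) (hρ : ρ ≠ 0)
    (hβ : IsPrimitiveRoot β ρ) (s : ZMod m) : Set.InjOn (fun i : Fin n => β ^ (i : ℕ)) (block n s) := by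
  intro i hi j hj hij
  rw [Finset.mem_coe, mem_block] at hi hj
  have h₁ : (i : ℕ) ≡ j [MOD m] := (ZMod.natCast_eq_natCast_iff _ _ _).1 (hi.trans hj.symm)
  have h₂ : (i : ℕ) ≡ j [MOD ρ] :=
    hβ.eq_orderOf ▸ (hβ.isOfFinOrder hρ).pow_eq_pow_iff_modEq.1 hij
  have h₃ := (Nat.modEq_and_modEq_iff_modEq_mul hco).1 ⟨h₁, h₂⟩
  rw [← hn] at h₃
  exact Fin.ext (h₃.eq_of_lt_of_lt i.2 j.2)

theorem card_block_le (hn : n = m * ρ) (s : ZMod m) : (block n s).card ≤ ρ := by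
  rw [← Finset.card_range ρ]
  refine Finset.card_le_card_of_injOn (fun i => (i : ℕ) / m) (fun i _ => ?_) fun i hi j hj hij => ?_
  · exact Finset.mem_coe.2 (Finset.mem_range.2 (Nat.div_lt_of_lt_mul (hn ▸ i.2)))
  · rw [Finset.mem_coe, mem_block] at hi hj
    have h₁ : (i : ℕ) ≡ j [MOD m] := (ZMod.natCast_eq_natCast_iff _ _ _).1 (hi.trans hj.symm)
    exact Fin.ext (Nat.ext_div_modEq hij h₁)

theorem sum_smul_inv_pow_eq_zero [Fintype F] {x : K} (hx : x ^ (Fintype.card F + 1) = 1)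
    {S : Finset (Fin n)} {v : Fin n → F} (h : ∑ i ∈ S, v i • x ^ (i : ℕ) = 0) :
    ∑ i ∈ S, v i • x⁻¹ ^ (i : ℕ) = 0 := by
  have hinv : x ^ Fintype.card F = x⁻¹ := eq_inv_of_mul_eq_one_left (by rw [← pow_succ, hx])
  have := congrArg (FiniteField.frobeniusAlgHom F K) h
  simp only [map_sum, map_smul, map_zero, FiniteField.coe_frobeniusAlgHom] at this
  simpa only [pow_right_comm x _ (Fintype.card F), hinv] using this

theorem eq_zero_of_card_le_two [Fintype F] (hn : n = m * ρ) (hco : m.Coprime ρ) (hρ : Odd ρ)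
    (hq : ρ ∣ Fintype.card F + 1) (hβ : IsPrimitiveRoot β ρ) {v : Fin n → F}
    (hv : v ∈ code F n m β) {s : ZMod m} {S : Finset (Fin n)} (hS : S ⊆ block n s)
    (hsupp : ∀ i ∈ block n s, v i ≠ 0 → i ∈ S) (hcard : S.card ≤ 2) : ∀ i ∈ S, v i = 0 := by
  have hβ0 : β ≠ 0 := hβ.ne_zero hρ.pos.ne'
  have h₁ : ∑ i ∈ S, v i • β ^ (i : ℕ) = 0 := by
    rw [← (mem_code.1 hv).1 s]
    refine Finset.sum_subset hS fun i hi hiS => ?_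
    rw [not_not.1 (mt (hsupp i hi) hiS), zero_smul]
  have h₂ := sum_smul_inv_pow_eq_zero ((hβ.pow_eq_one_iff_dvd _).2 hq) h₁
  have key := Finset.eq_zero_of_sum_mul_pow_eq_zero (S := S)
    (c := fun i => v i • β⁻¹ ^ (i : ℕ)) (x := fun i => (β ^ 2) ^ (i : ℕ))
    ((pow_injOn_block hn hco hρ.pos.ne'
      (hβ.pow_of_coprime 2 (Nat.coprime_two_left.2 hρ)) s).mono (Finset.coe_subset.2 hS)) ?_
  · intro i hi
    simpa [hβ0] using key i hi
  · intro j hj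
    have hj2 : j < 2 := hj.trans_le hcard
    interval_cases j
    · simpa using h₂
    · rw [← h₁]
      refine Finset.sum_congr rfl fun i _ => ?_
      rw [pow_one, smul_mul_assoc, ← mul_pow]
      congr 2
      field_simp

theorem eq_zero_of_support_subset_block [Fintype F] (hn : n = m * ρ) (hco : m.Coprime ρ)
    (hρ : ρ ≠ 0) (hq : ρ ∣ Fintype.card F + 1) (hβ : IsPrimitiveRoot β ρ) {v : Fin n → F}
    (hv : v ∈ code F n m β) {s : ZMod m} {S : Finset (Fin n)} (hS : S ⊆ block n s)
    (hsupp : ∀ i, v i ≠ 0 → i ∈ S) (hcard : S.card ≤ 5) : v = 0 := by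
  have hβ0 : β ≠ 0 := hβ.ne_zero hρ
  have hq1 : β ^ (Fintype.card F + 1) = 1 := (hβ.pow_eq_one_iff_dvd _).2 hq
  obtain ⟨h, h0, h2⟩ := mem_code.1 hv
  have hzero : ∀ i ∉ S, v i = 0 := fun i hi => not_not.1 (mt (hsupp i) hi)
  have h1 : ∑ i ∈ S, v i • β ^ (i : ℕ) = 0 := by
    rw [← h s]
    exact Finset.sum_subset hS fun i _ hiS => by rw [hzero i hiS, zero_smul]
  replace h2 : ∑ i ∈ S, v i • (β ^ 2) ^ (i : ℕ) = 0 := by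
    rw [← h2]
    exact Finset.sum_subset (Finset.subset_univ S) fun i _ hiS => by rw [hzero i hiS, zero_smul]
  replace h0 : ∑ i ∈ S, v i • (1 : K) = 0 := by
    rw [← Finset.sum_smul, Finset.sum_subset (Finset.subset_univ S) fun i _ hiS => hzero i hiS,
      h0, zero_smul]
  have h1' := sum_smul_inv_pow_eq_zero hq1 h1
  have h2' := sum_smul_inv_pow_eq_zero (x := β ^ 2)
    (by rw [← pow_mul, mul_comm, pow_mul, hq1, one_pow]) h2
  have key := Finset.eq_zero_of_sum_mul_pow_eq_zero (S := S)
    (c := fun i => v i • (β ^ 2)⁻¹ ^ (i : ℕ)) (x := fun i => β ^ (i : ℕ))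
    ((pow_injOn_block hn hco hρ hβ s).mono (Finset.coe_subset.2 hS)) ?_
  · funext i
    by_cases hi : i ∈ S
    · simpa [hβ0] using key i hi
    · exact hzero i hi
  · intro j hj
    have hterm (i : Fin n) : v i • (β ^ 2)⁻¹ ^ (i : ℕ) * (β ^ (i : ℕ)) ^ j =
        v i • ((β ^ 2)⁻¹ * β ^ j) ^ (i : ℕ) := by
      rw [smul_mul_assoc, mul_pow, pow_right_comm β]
    simp only [hterm]
    have hj5 : j < 5 := hj.trans_le hcard
    interval_cases j
    · simpa only [pow_zero, mul_one] using h2'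
    · rw [show (β ^ 2)⁻¹ * β ^ 1 = β⁻¹ by field_simp]
      exact h1'
    · rw [inv_mul_cancel₀ (pow_ne_zero 2 hβ0)]
      simpa only [one_pow] using h0
    · rw [show (β ^ 2)⁻¹ * β ^ 3 = β by field_simp]
      exact h1
    · rw [show (β ^ 2)⁻¹ * β ^ 4 = β ^ 2 by field_simp]
      exact h2

theorem three_le_card_filter_block [Fintype F] (hn : n = m * ρ) (hco : m.Coprime ρ)
    (hρ : Odd ρ) (hq : ρ ∣ Fintype.card F + 1) (hβ : IsPrimitiveRoot β ρ) {v : Fin n → F}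
    (hv : v ∈ code F n m β) {s : ZMod m} {i : Fin n} (hi : i ∈ block n s) (hvi : v i ≠ 0) :
    3 ≤ ((block n s).filter fun j => v j ≠ 0).card := by
  by_contra! hlt
  exact hvi (eq_zero_of_card_le_two hn hco hρ hq hβ hv (Finset.filter_subset _ _)
    (fun j hj hvj => Finset.mem_filter.2 ⟨hj, hvj⟩) (Nat.le_of_lt_succ hlt) i
    (Finset.mem_filter.2 ⟨hi, hvi⟩))

theorem hasLocality_code [Fintype F] (hn : n = m * ρ) (hco : m.Coprime ρ) (hρ : Odd ρ)
    (hq : ρ ∣ Fintype.card F + 1) (hβ : IsPrimitiveRoot β ρ) {r : ℕ} (hr : ρ = r + 2) :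
    HasLocality (code F n m β : Set (Fin n → F)) r 3 := by
  intro i
  refine ⟨block n ((i : ℕ) : ZMod m), mem_block.2 rfl, ?_, ?_⟩
  · exact (card_block_le hn _).trans hr.le
  · rintro v hv ⟨j, hj, hvj⟩
    exact three_le_card_filter_block hn hco hρ hq hβ hv hj hvj

theorem minDistGe_code [Fintype F] (hn : n = m * ρ) (hco : m.Coprime ρ) (hρ : Odd ρ)
    (hq : ρ ∣ Fintype.card F + 1) (hβ : IsPrimitiveRoot β ρ) :
    MinDistGe (code F n m β : Set (Fin n → F)) 6 := by
  intro v hv hv0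
  by_contra! hlt
  obtain ⟨i, hi⟩ := Function.ne_iff.1 hv0
  by_cases hsupp : ∀ j, v j ≠ 0 → j ∈ block n ((i : ℕ) : ZMod m)
  · refine hv0 (eq_zero_of_support_subset_block hn hco hρ.pos.ne' hq hβ hv
      (s := ((i : ℕ) : ZMod m)) (S := Finset.univ.filter fun j => v j ≠ 0) (fun j hj => ?_) (fun j hj => ?_)
      (Nat.le_of_lt_succ hlt))
    · exact hsupp j (Finset.mem_filter.1 hj).2
    · exact Finset.mem_filter.2 ⟨Finset.mem_univ j, hj⟩
  · push Not at hsupp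
    obtain ⟨j, hj, hij⟩ := hsupp
    have h₁ := three_le_card_filter_block hn hco hρ hq hβ hv (mem_block.2 rfl) hi
    have h₂ := three_le_card_filter_block hn hco hρ hq hβ hv (mem_block.2 rfl) hj
    have hdisj : Disjoint ((block n ((i : ℕ) : ZMod m)).filter fun k => v k ≠ 0)
        ((block n ((j : ℕ) : ZMod m)).filter fun k => v k ≠ 0) := by
      refine Finset.disjoint_left.2 fun k hk hk' => hij ?_
      simp only [Finset.mem_filter, mem_block] at hk hk' ⊢
      exact hk'.1.symm.trans hk.1
    have h₃ := Finset.card_le_card (Finset.union_subset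
      (Finset.filter_subset_filter (fun k => v k ≠ 0)
        (Finset.subset_univ (block n ((i : ℕ) : ZMod m))))
      (Finset.filter_subset_filter (fun k => v k ≠ 0)
        (Finset.subset_univ (block n ((j : ℕ) : ZMod m)))))
    rw [Finset.card_union_of_disjoint hdisj] at h₃
    rw [wt] at hlt
    omega

/-- Two positions in every block of `Fin n`, together with the first `b` positions of the
block of `0`. -/
def positions (n m b : ℕ) : Finset (Fin n) :=
  Finset.univ.filter fun i => (i : ℕ) < 2 * m ∨ m ∣ i ∧ (i : ℕ) < b * m

theorem le_card_positions (hn : n = m * ρ) (hm : 0 < m) {b : ℕ} (hb : 2 ≤ b) (hbρ : b ≤ ρ) :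
    2 * m + (b - 2) ≤ (positions n m b).card := by
  have hdisj : Disjoint (Finset.range (2 * m)) ((Finset.Ico 2 b).image (· * m)) := by
    refine Finset.disjoint_left.2 fun k hk hk' => ?_
    obtain ⟨t, ht, rfl⟩ := Finset.mem_image.1 hk'
    exact (Finset.mem_range.1 hk).not_ge (Nat.mul_le_mul_right m (Finset.mem_Ico.1 ht).1)
  have hsub : Finset.range (2 * m) ∪ (Finset.Ico 2 b).image (· * m) ⊆
      (positions n m b).image Fin.val := by
    have hlt : b * m ≤ n := by
      rw [hn, mul_comm m]
      exact Nat.mul_le_mul_right m hbρ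
    refine Finset.union_subset (fun k hk => ?_) fun k hk => ?_
    · have hk := Finset.mem_range.1 hk
      exact Finset.mem_image.2 ⟨⟨k, hk.trans_le ((Nat.mul_le_mul_right m hb).trans hlt)⟩,
        Finset.mem_filter.2 ⟨Finset.mem_univ _, Or.inl hk⟩, rfl⟩
    · obtain ⟨t, ht, rfl⟩ := Finset.mem_image.1 hk
      have htb : t * m < b * m := Nat.mul_lt_mul_of_pos_right (Finset.mem_Ico.1 ht).2 hm
      exact Finset.mem_image.2 ⟨⟨t * m, htb.trans_le hlt⟩,
        Finset.mem_filter.2 ⟨Finset.mem_univ _, Or.inr ⟨Nat.dvd_mul_left m t, htb⟩⟩, rfl⟩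
  have hcard := (Finset.card_le_card hsub).trans Finset.card_image_le
  rwa [Finset.card_union_of_disjoint hdisj, Finset.card_range,
    Finset.card_image_of_injective _ (mul_left_injective₀ hm.ne'), Nat.card_Ico] at hcard

theorem wt_le_of_support_subset_positions [Fintype F] (hn : n = m * ρ) (hco : m.Coprime ρ)
    (hρ : Odd ρ) (hq : ρ ∣ Fintype.card F + 1) (hβ : IsPrimitiveRoot β ρ) {b : ℕ} (hb : 2 ≤ b)
    {v : Fin n → F} (hv : v ∈ code F n m β) (hsupp : ∀ i, v i ≠ 0 → i ∈ positions n m b) :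
    wt v ≤ b := by
  have hmem (i : Fin n) (hi : v i ≠ 0) : m ∣ i ∧ (i : ℕ) < b * m := by
    refine (Finset.mem_filter.1 (hsupp i hi)).2.elim (fun hlt => ?_) id
    refine ⟨?_, hlt.trans_le (Nat.mul_le_mul_right m hb)⟩
    by_contra hdvd
    refine (three_le_card_filter_block hn hco hρ hq hβ hv (mem_block.2 rfl) hi).not_gt
      (Nat.lt_succ_of_le ?_)
    rw [← Finset.card_range 2]
    refine Finset.card_le_card_of_injOn (fun j => (j : ℕ) / m) (fun j hj => ?_)
      fun j hj k hk hjk => ?_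
    · obtain ⟨hj, hvj⟩ := Finset.mem_filter.1 hj
      have hmod : (j : ℕ) ≡ i [MOD m] := (ZMod.natCast_eq_natCast_iff _ _ _).1 (mem_block.1 hj)
      have hj2 : (j : ℕ) < 2 * m := (Finset.mem_filter.1 (hsupp j hvj)).2.resolve_right
        fun h => hdvd ((hmod.dvd_iff dvd_rfl).1 h.1)
      exact Finset.mem_coe.2 (Finset.mem_range.2 (Nat.div_lt_of_lt_mul (mul_comm 2 m ▸ hj2)))
    · have hj := mem_block.1 (Finset.mem_filter.1 hj).1
      have hk := mem_block.1 (Finset.mem_filter.1 hk).1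
      exact Fin.ext (Nat.ext_div_modEq hjk
        ((ZMod.natCast_eq_natCast_iff _ _ _).1 (hj.trans hk.symm)))
  rw [wt, ← Finset.card_range b]
  refine Finset.card_le_card_of_injOn (fun j => (j : ℕ) / m) (fun j hj => ?_)
    fun j hj k hk hjk => ?_
  · have hj := (hmem j (Finset.mem_filter.1 hj).2).2
    exact Finset.mem_coe.2 (Finset.mem_range.2 (Nat.div_lt_of_lt_mul (mul_comm b m ▸ hj)))
  · have hj := (hmem j (Finset.mem_filter.1 hj).2).1
    have hk := (hmem k (Finset.mem_filter.1 hk).2).1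
    exact Fin.ext ((Nat.div_left_inj hj hk).1 hjk)

/-- Restriction of codewords to the positions outside `P`. -/
def puncture (V : Submodule F (Fin n → F)) (P : Finset (Fin n)) : V →ₗ[F] ({i // i ∉ P} → F) :=
  (LinearMap.funLeft F F Subtype.val).comp V.subtype

theorem mem_of_puncture_eq_zero {V : Submodule F (Fin n → F)} {P : Finset (Fin n)} {v : V}
    (hv : puncture V P v = 0) (i : Fin n) (hi : (v : Fin n → F) i ≠ 0) : i ∈ P := by
  by_contra hiP
  exact hi (congrFun hv ⟨i, hiP⟩)

theorem finrank_puncture_codomain (P : Finset (Fin n)) :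
    Module.finrank F ({i // i ∉ P} → F) = n - P.card := by
  rw [Module.finrank_fintype_fun_eq_card, Fintype.card_subtype_compl]
  simp

theorem finrank_code [Fintype F] (hn : n = m * ρ) (hm : 0 < m) (hco : m.Coprime ρ)
    (hρ : Odd ρ) (hρ5 : 5 ≤ ρ) (hq : ρ ∣ Fintype.card F + 1) (hβ : IsPrimitiveRoot β ρ)
    (hK : Module.finrank F K = 2) :
    Module.finrank F (code F n m β) = n - (2 * m + 3) := by
  have : NeZero m := ⟨hm.ne'⟩
  have : FiniteDimensional F K := Module.finite_of_finrank_pos (by omega)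
  refine le_antisymm ?_ ?_
  · have hinj : Function.Injective (puncture (code F n m β) (positions n m 5)) := by
      rw [← LinearMap.ker_eq_bot, LinearMap.ker_eq_bot']
      intro v hv
      by_contra hv0
      have hle := wt_le_of_support_subset_positions hn hco hρ hq hβ (by norm_num) v.2
        (mem_of_puncture_eq_zero hv)
      have hge := minDistGe_code hn hco hρ hq hβ v v.2 fun h => hv0 (Subtype.ext h)
      omega
    have hle := LinearMap.finrank_le_finrank_of_injective hinj
    rw [finrank_puncture_codomain] at hle
    exact hle.trans (Nat.sub_le_sub_left (le_card_positions hn hm (by norm_num) hρ5) n)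
  · have hrank := (syndrome F n m β).finrank_range_add_finrank_ker
    have hrange := (LinearMap.range (syndrome F n m β)).finrank_le
    have hcod : Module.finrank F ((ZMod m → K) × F × K) = 2 * m + 3 := by
      rw [Module.finrank_prod, Module.finrank_prod, Module.finrank_pi_fintype]
      simp [hK, ZMod.card]
      ring
    rw [Module.finrank_fintype_fun_eq_card, Fintype.card_fin] at hrank
    rw [code]
    omega

theorem minDistIs_code [Fintype F] (hn : n = m * ρ) (hm : 0 < m) (hco : m.Coprime ρ)
    (hρ : Odd ρ) (hρ6 : 6 ≤ ρ) (hq : ρ ∣ Fintype.card F + 1) (hβ : IsPrimitiveRoot β ρ)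
    (hK : Module.finrank F K = 2) :
    MinDistIs (code F n m β : Set (Fin n → F)) 6 := by
  have hge := minDistGe_code (F := F) hn hco hρ hq hβ
  have hlt : Module.finrank F ({i // i ∉ positions n m 6} → F) <
      Module.finrank F (code F n m β) := by
    rw [finrank_puncture_codomain, finrank_code hn hm hco hρ (by omega) hq hβ hK]
    have := le_card_positions hn hm (by norm_num) hρ6
    have : m * 6 ≤ n := hn ▸ Nat.mul_le_mul_left m hρ6
    omega
  obtain ⟨v, hv, hv0⟩ := Submodule.exists_mem_ne_zero_of_ne_bot
    (LinearMap.ker_ne_bot_of_finrank_lt (f := puncture (code F n m β) (positions n m 6)) hlt)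
  have hv0' : (v : Fin n → F) ≠ 0 := fun h => hv0 (Subtype.ext h)
  exact ⟨hge, v, v.2, hv0', le_antisymm (wt_le_of_support_subset_positions hn hco hρ hq hβ
    (by norm_num) v.2 (mem_of_puncture_eq_zero hv)) (hge v v.2 hv0')⟩

end CyclicLRC

theorem isOptimalParams_six {m r : ℕ} (hm : 0 < m) (hr : 4 ≤ r) :
    IsOptimalParams (m * (r + 2)) (r * m - 3) 6 r 3 := by
  have h3 : 3 ≤ r * m := by nlinarith
  have hr0 : (0 : ℚ) < r := by exact_mod_cast (by omega : 0 < r)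
  have hceil : ⌈((r * m - 3 : ℕ) : ℚ) / (r : ℚ)⌉ = (m : ℤ) := by
    rw [Int.ceil_eq_iff, lt_div_iff₀ hr0, div_le_iff₀ hr0]
    push_cast [Nat.cast_sub h3]
    have : (4 : ℚ) ≤ r := by exact_mod_cast hr
    constructor <;> nlinarith
  rw [IsOptimalParams, hceil]
  push_cast [Nat.cast_sub h3]
  ring

/-- **Theorem 4 / main result (iv).** If `n` is odd, `gcd(n,q) = 1`, `r ≥ 4`,
`(r+2) ∣ gcd(n, q+1)` and `gcd(n/(r+2), r+2) = 1`, then there exists a `q`-ary optimal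
cyclic `(r,3)`-LRC of length `n`, dimension `k = rn/(r+2) - 3` and minimum distance `6`,
achieving the Singleton-type bound. -/
theorem exists_optimal_cyclic_LRC_delta_three_dist_six (F : Type*) [Field F] [Fintype F]
    (q n r : ℕ) (hq : Fintype.card F = q) [NeZero n] (hodd : Odd n)
    (hcop : Nat.Coprime n q)
    (hr : 4 ≤ r) (hdvd : (r + 2) ∣ Nat.gcd n (q + 1))
    (hgcd : Nat.gcd (n / (r + 2)) (r + 2) = 1) :
    ∃ C : Submodule F (Fin n → F),
      IsCyclic' C ∧
      Module.finrank F C = r * n / (r + 2) - 3 ∧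
      MinDistIs (C : Set (Fin n → F)) 6 ∧
      HasLocality (C : Set (Fin n → F)) r 3 ∧
      IsOptimalParams n (r * n / (r + 2) - 3) 6 r 3 := by
  have hρn : r + 2 ∣ n := hdvd.trans (Nat.gcd_dvd_left _ _)
  have hρq : r + 2 ∣ Fintype.card F + 1 := hq ▸ hdvd.trans (Nat.gcd_dvd_right _ _)
  have hρ : Odd (r + 2) := hodd.of_dvd_nat hρn
  set m := n / (r + 2)
  have hn : n = m * (r + 2) := (Nat.div_mul_cancel hρn).symm
  have hm : 0 < m := Nat.div_pos (Nat.le_of_dvd (NeZero.pos n) hρn) (by omega)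
  have hk : r * n / (r + 2) = r * m := Nat.mul_div_assoc r hρn
  obtain ⟨K, _, _, β, hK, hβ⟩ := FiniteField.exists_quadratic_extension_primitiveRoot F hρq
  refine ⟨CyclicLRC.code F n m β, CyclicLRC.isCyclic'_code ⟨_, hn⟩
    ((hβ.pow_eq_one_iff_dvd n).2 hρn), ?_,
    CyclicLRC.minDistIs_code hn hm hgcd hρ (by omega) hρq hβ hK,
    CyclicLRC.hasLocality_code hn hgcd hρ hρq hβ rfl, ?_⟩
  · rw [CyclicLRC.finrank_code hn hm hgcd hρ (by omega) hρq hβ hK, hk]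
    have : n = r * m + 2 * m := hn.trans (by ring)
    omega
  · rw [hk]
    have hopt := isOptimalParams_six hm hr
    rwa [← hn] at hopt
end

section
/- Let q be a prime power and n a positive integer with gcd(n,q)=1. Let δ ≥ 2 and r ≥ δ+1 with (r+δ-1) dividing gcd(n, q-1) and gcd(n/(r+δ-1), r+δ-1) = 1; set ρ = n/(r+δ-1). Let ξ be a primitive n-th root of unity in the splitting field of x^n - 1 over F_q, let α = ξ^ρ ∈ F_q (a primitive (r+δ-1)-th root of unity), let a, b be integers with aρ + b(r+δ-1) = 1, and let γ = α^a ∈ F_q. Then no nonzero polynomial c(x) ∈ F_q[x] of degree less than n having at most 2δ-1 nonzero coefficients is divisible by g(x) = (x-1)·∏_{i=1}^{δ-1}(x^ρ - α^i)·∏_{j=δ}^{2δ-2}(x - γ^j); equivalently, the q-ary cyclic code with generator polynomial g(x) has minimum distance at least 2δ. -/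
open Polynomial

/-- A BCH-type bound: a nonzero polynomial of degree less than `m` that vanishes at `d` consecutive
powers of a primitive `m`-th root of unity has more than `d` nonzero coefficients. -/
theorem lt_card_support_of_eval_pow_eq_zero {K : Type*} [Field K] {m l d : ℕ} {α : K}
    (hα : IsPrimitiveRoot α m) {p : K[X]} (hp : p ≠ 0) (hdeg : p.natDegree < m)
    (h : ∀ i, l ≤ i → i < l + d → p.eval (α ^ i) = 0) : d < p.support.card := by
  by_contra! hle
  have hα0 : α ≠ 0 := hα.ne_zero (by omega)
  let e := p.support.equivFin.symm
  have hlt : ∀ j, (e j : ℕ) < m := fun j ↦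
    (le_natDegree_of_mem_supp _ (e j).2).trans_lt hdeg
  have hinj : Function.Injective fun j ↦ α ^ (e j : ℕ) := fun j k hjk ↦
    e.injective (Subtype.ext (hα.pow_inj (hlt j) (hlt k) hjk))
  have hzero : (fun j ↦ p.coeff (e j) * α ^ ((e j : ℕ) * l)) = 0 := by
    refine Matrix.eq_zero_of_forall_pow_sum_mul_pow_eq_zero hinj fun i ↦ ?_
    have hi := h (l + i) (by omega) (by omega)
    rw [eval_eq_sum, sum_def, ← Finset.sum_coe_sort, ← e.sum_comp] at hi
    rw [← hi]
    refine Finset.sum_congr rfl fun j _ ↦ ?_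
    rw [← pow_mul, ← pow_mul, mul_assoc, ← pow_add]
    congr 2
    ring
  obtain ⟨k, hk⟩ := support_nonempty.2 hp
  have hk0 := congrFun hzero (e.symm ⟨k, hk⟩)
  simp only [Equiv.apply_symm_apply, Pi.zero_apply, mul_eq_zero, pow_ne_zero _ hα0, or_false]
    at hk0
  exact mem_support_iff.1 hk hk0

/-- The polynomial whose `k`-th coefficient is the coefficient of `p` at `k * ρ + s`. -/
noncomputable def residueSection {K : Type*} [Semiring K] (ρ s : ℕ) (p : K[X]) : K[X] :=
  ∑ k ∈ Finset.range (p.natDegree + 1), monomial k (p.coeff (k * ρ + s))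

section residueSection

variable {K : Type*} {ρ s : ℕ}

theorem coeff_residueSection [Semiring K] (hρ : 0 < ρ) (p : K[X]) (k : ℕ) :
    (residueSection ρ s p).coeff k = p.coeff (k * ρ + s) := by
  simp only [residueSection, finsetSum_coeff, coeff_monomial, Finset.sum_ite_eq',
    Finset.mem_range]
  split_ifs with hk
  · rfl
  · exact (coeff_eq_zero_of_natDegree_lt (by nlinarith)).symm

theorem residueSection_X_pow_sub_C_mul [Ring K] (hs : s < ρ) (β : K) (p : K[X]) :
    residueSection ρ s ((X ^ ρ - C β) * p) = (X - C β) * residueSection ρ s p := by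
  have hρ : 0 < ρ := by omega
  ext k
  cases k with
  | zero =>
    simp [coeff_residueSection hρ, sub_mul, coeff_X_pow_mul', hs]
  | succ k =>
    simp only [coeff_residueSection hρ, sub_mul, coeff_sub, coeff_C_mul, coeff_X_mul]
    rw [show (k + 1) * ρ + s = k * ρ + s + ρ by ring, coeff_X_pow_mul]

theorem eval_residueSection_eq_zero [CommRing K] (hs : s < ρ) {β : K} {p : K[X]}
    (h : X ^ ρ - C β ∣ p) : (residueSection ρ s p).eval β = 0 := by
  obtain ⟨t, rfl⟩ := h
  simp [residueSection_X_pow_sub_C_mul hs]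

theorem natDegree_residueSection_lt [Semiring K] (hρ : 0 < ρ) {m : ℕ} {p : K[X]}
    (hm : 0 < m) (hp : p.natDegree < m * ρ) : (residueSection ρ s p).natDegree < m := by
  refine (Nat.le_sub_one_iff_lt hm).1 (natDegree_le_iff_coeff_eq_zero.2 fun k hk ↦ ?_)
  have hmk : m ≤ k := by omega
  rw [coeff_residueSection hρ]
  exact coeff_eq_zero_of_natDegree_lt (by nlinarith)

theorem card_support_residueSection_le [Semiring K] (hs : s < ρ) (p : K[X]) :
    (residueSection ρ s p).support.card ≤ {k ∈ p.support | k % ρ = s}.card := by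
  have hρ : 0 < ρ := by omega
  refine Finset.card_le_card_of_injOn (fun k ↦ k * ρ + s) (fun k hk ↦ ?_) fun j _ k _ hjk ↦ ?_
  · have hk' : p.coeff (k * ρ + s) ≠ 0 := by
      simpa [coeff_residueSection hρ] using hk
    simp [hk', Nat.mod_eq_of_lt hs]
  · exact Nat.eq_of_mul_eq_mul_right hρ (Nat.add_right_cancel hjk)

theorem card_support_residueSection_add_le [Semiring K] {t : ℕ} (hs : s < ρ) (ht : t < ρ)
    (hst : s ≠ t) (p : K[X]) :
    (residueSection ρ s p).support.card + (residueSection ρ t p).support.card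
      ≤ p.support.card := by
  refine (add_le_add (card_support_residueSection_le hs p)
    (card_support_residueSection_le ht p)).trans ?_
  rw [← Finset.card_union_of_disjoint]
  · exact Finset.card_le_card
      (Finset.union_subset (Finset.filter_subset _ _) (Finset.filter_subset _ _))
  · exact Finset.disjoint_filter.2 fun k _ h h' ↦ hst (h.symm.trans h')

theorem exists_residueSection_ne_zero [Semiring K] (hρ : 0 < ρ) {p : K[X]} (hp : p ≠ 0) :
    ∃ s < ρ, residueSection ρ s p ≠ 0 := by
  obtain ⟨k, hk⟩ := support_nonempty.2 hp
  refine ⟨k % ρ, Nat.mod_lt k hρ, fun h ↦ mem_support_iff.1 hk ?_⟩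
  have := congrArg (fun f ↦ f.coeff (k / ρ)) h
  simpa [coeff_residueSection hρ, Nat.div_add_mod'] using this

theorem eq_X_pow_mul_expand_residueSection [CommSemiring K] (hs : s < ρ) {p : K[X]}
    (h : ∀ t < ρ, t ≠ s → residueSection ρ t p = 0) :
    p = X ^ s * expand K ρ (residueSection ρ s p) := by
  have hρ : 0 < ρ := by omega
  ext k
  have hkρ := Nat.div_add_mod' k ρ
  rw [coeff_X_pow_mul', coeff_expand hρ]
  by_cases hks : k % ρ = s
  · have hsub : k - s = k / ρ * ρ := by omega
    rw [if_pos (by omega), hsub, if_pos (Nat.dvd_mul_left _ _), Nat.mul_div_cancel _ hρ,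
      coeff_residueSection hρ]
    congr 1
    omega
  · have hk0 : p.coeff k = 0 := by
      have := congrArg (fun f ↦ f.coeff (k / ρ)) (h _ (Nat.mod_lt k hρ) hks)
      simpa [coeff_residueSection hρ, hkρ] using this
    rw [hk0]
    split_ifs with hle hdvd
    · refine absurd ?_ hks
      obtain ⟨u, hu⟩ := hdvd
      rw [show k = s + ρ * u by omega, Nat.add_mul_mod_self_left, Nat.mod_eq_of_lt hs]
    · rfl
    · rfl

end residueSection

/-- The key step of Theorem 3: with `ρ = n/(r+δ-1)`, `gcd(ρ, r+δ-1) = 1`, `ξ` a primitive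
`n`-th root of unity, `α = ξ^ρ`, `aρ + b(r+δ-1) = 1` and `γ = α^a`, no nonzero polynomial
`c(x) ∈ F_q[x]` of degree `< n` with at most `2δ - 1` nonzero coefficients is divisible by
`g(x) = (x-1)·∏_{i=1}^{δ-1}(x^ρ - α^i)·∏_{j=δ}^{2δ-2}(x - γ^j)`; equivalently, the `q`-ary
cyclic code with generator polynomial `g` has minimum distance at least `2δ`. -/
theorem min_dist_ge_two_delta (F K : Type*) [Field F] [Fintype F] [Field K] [Algebra F K]
    (q n r δ : ℕ) (hq : Fintype.card F = q) (hn : 0 < n) (hcop : Nat.Coprime n q)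
    (hδ : 2 ≤ δ) (hr : δ + 1 ≤ r) (hdvd : (r + δ - 1) ∣ Nat.gcd n (q - 1))
    (ρ : ℕ) (hρ : ρ = n / (r + δ - 1))
    (hgcd : Nat.gcd ρ (r + δ - 1) = 1)
    (ξ : K) (hξ : IsPrimitiveRoot ξ n) (α : K) (hα : α = ξ ^ ρ)
    (a b : ℤ) (hab : a * (ρ : ℤ) + b * ((r + δ - 1 : ℕ) : ℤ) = 1)
    (γ : K) (hγ : γ = α ^ a) :
    ∀ c : F[X], c ≠ 0 → c.natDegree < n → c.support.card ≤ 2 * δ - 1 →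
      ¬ ((X - 1) * (∏ i ∈ Finset.Icc 1 (δ - 1), (X ^ ρ - C (α ^ i)))
          * (∏ j ∈ Finset.Icc δ (2 * δ - 2), (X - C (γ ^ j)))
          ∣ c.map (algebraMap F K)) := by
  intro c hc hdeg hcard hg
  obtain ⟨m, hm⟩ : ∃ m, m = r + δ - 1 := ⟨_, rfl⟩
  rw [← hm] at hdvd hρ hab
  have hm0 : 0 < m := by omega
  have hmn : n = m * ρ := by rw [hρ, Nat.mul_div_cancel' (hdvd.trans (Nat.gcd_dvd_left _ _))]
  have hρ0 : 0 < ρ := Nat.pos_of_mul_pos_left (hmn ▸ hn)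
  have hαm : IsPrimitiveRoot α m := hα ▸ hξ.pow hn (hmn.trans (mul_comm _ _))
  have hα0 : α ≠ 0 := hαm.ne_zero hm0.ne'
  have hγρ : γ ^ ρ = α := by
    have hexp : a * (ρ : ℤ) = 1 + (m : ℤ) * -b := by linarith
    rw [hγ, ← zpow_natCast, ← zpow_mul, hexp, zpow_add₀ hα0, zpow_mul, zpow_natCast,
      hαm.pow_eq_one, one_zpow, zpow_one, mul_one]
  have hγ0 : γ ≠ 0 := hγ ▸ zpow_ne_zero _ hα0
  obtain ⟨p, hp⟩ : ∃ p, p = c.map (algebraMap F K) := ⟨_, rfl⟩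
  rw [← hp] at hg
  have hp0 : p ≠ 0 := by rwa [hp, Polynomial.map_ne_zero_iff (algebraMap F K).injective]
  have hpdeg : p.natDegree < m * ρ := by rwa [hp, natDegree_map, ← hmn]
  have hpcard : p.support.card ≤ 2 * δ - 1 := by
    rwa [hp, support_map_of_injective _ (algebraMap F K).injective]
  have hfactor : ∀ i, 1 ≤ i → i ≤ δ - 1 → X ^ ρ - C (α ^ i) ∣ p := fun i h1 h2 ↦
    ((Finset.dvd_prod_of_mem (fun i ↦ (X ^ ρ - C (α ^ i) : K[X]))
      (Finset.mem_Icc.2 ⟨h1, h2⟩)).trans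
        ((Dvd.intro_left _ rfl).trans (Dvd.intro _ rfl))).trans hg
  have hsec : ∀ s < ρ, residueSection ρ s p ≠ 0 → δ ≤ (residueSection ρ s p).support.card := by
    intro s hs hs0
    have := lt_card_support_of_eval_pow_eq_zero (l := 1) (d := δ - 1) hαm hs0
      (natDegree_residueSection_lt hρ0 hm0 hpdeg)
      fun i h1 h2 ↦ eval_residueSection_eq_zero hs (hfactor i h1 (by omega))
    omega
  obtain ⟨s, hs, hs0⟩ := exists_residueSection_ne_zero hρ0 hp0
  have hother : ∀ t < ρ, t ≠ s → residueSection ρ t p = 0 := by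
    intro t ht hts
    by_contra ht0
    have h1 := hsec s hs hs0
    have h2 := hsec t ht ht0
    have h3 := card_support_residueSection_add_le hs ht hts.symm p
    omega
  have hroot : ∀ j, j < 2 * δ - 1 → p.eval (γ ^ j) = 0 := by
    intro j hj
    rcases Nat.eq_zero_or_pos j with rfl | hj0
    · rw [pow_zero, ← IsRoot.def, ← dvd_iff_isRoot, C_1]
      exact ((Dvd.intro _ rfl).trans (Dvd.intro _ rfl)).trans hg
    rcases Nat.lt_or_ge j δ with hjδ | hjδ
    · refine eval_eq_zero_of_dvd_of_eval_eq_zero (hfactor j hj0 (by omega)) ?_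
      simp [← hγρ, ← pow_mul, mul_comm]
    · rw [← IsRoot.def, ← dvd_iff_isRoot]
      exact ((Finset.dvd_prod_of_mem (fun j ↦ (X - C (γ ^ j) : K[X]))
        (Finset.mem_Icc.2 ⟨hjδ, by omega⟩)).trans (Dvd.intro_left _ rfl)).trans hg
  have hlt := lt_card_support_of_eval_pow_eq_zero (l := 0) (d := 2 * δ - 1) hαm hs0
    (natDegree_residueSection_lt hρ0 hm0 hpdeg) fun j _ hj ↦ by
      have h := hroot j (by omega)
      rw [eq_X_pow_mul_expand_residueSection hs hother] at h
      simpa [expand_eval, hγ0, ← pow_mul, mul_comm j ρ, pow_mul γ ρ, hγρ] using h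
  have hle := (card_support_residueSection_le hs p).trans
    (Finset.card_le_card (Finset.filter_subset _ _))
  omega
end
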